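/- Uniqueness of small self-similar solutions: there exists δ > 0 such that if S and S' are two self-similar solutions of mKdV with ‖S‖_{E(1)} ≤ δ, ‖S'‖_{E(1)} ≤ δ, and Ŝ(1)(0⁺) = Ŝ'(1)(0⁺), then S = S'. -/

import Mathlib

open MeasureTheory Set Filter Topology

noncomputable section

namespace MKdVPaper

/-- The Japanese bracket `⟨y⟩ = √(1+y²)`. -/
def jap (y : ℝ) : ℝ := Real.sqrt (1 + y ^ 2)

/-- Truncated Fourier-type integral recovering the physical function from a profile `w`:
`(1/π) Re ∫_0^R e^{i(px + p³ t)} w(p) dp`. -/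
def physPartial (w : ℝ → ℂ) (t x R : ℝ) : ℝ :=
  (1 / Real.pi) *
    (∫ p in Ioc (0 : ℝ) R, Complex.exp (Complex.I * ((p * x + p ^ 3 * t : ℝ) : ℂ)) * w p).re

/-- `u` is the physical-space function associated with the profile `w` at time `t`, i.e.
`u(x) = (1/π) Re ∫_0^∞ e^{i(px + p³t)} w(p) dp` as an improper integral. -/
def IsPhys (w : ℝ → ℂ) (t : ℝ) (u : ℝ → ℝ) : Prop :=
  ∀ x : ℝ, Tendsto (fun R => physPartial w t x R) atTop (𝓝 (u x))

/-- Sup norm of a profile. -/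
def supN (w : ℝ → ℂ) : ℝ := ⨆ p : ℝ, ‖w p‖

/-- `L²((0,∞))` norm of the derivative of the profile. -/
def dL2 (w : ℝ → ℂ) : ℝ := (eLpNorm (deriv w) 2 (volume.restrict (Ioi 0))).toReal

/-- The `E(t)` norm: `‖ũ‖_{L^∞} + t^{-1/6} ‖∂_p ũ‖_{L²((0,∞))}`. -/
def EnormP (t : ℝ) (w : ℝ → ℂ) : ℝ := supN w + t ^ (-(1 / 6 : ℝ)) * dL2 w

/-- Membership conditions for `E(t)` on the profile side: profile of a real-valued
distribution, bounded and continuous on `(0,∞)`, with derivative in `L²((0,∞))`. -/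
structure MemE (w : ℝ → ℂ) : Prop where
  symm : ∀ p : ℝ, w (-p) = starRingEnd ℂ (w p)
  cont : ContinuousOn w (Ioi 0)
  bdd : BddAbove (range fun p : ℝ => ‖w p‖)
  diff : ∀ p ∈ Ioi (0 : ℝ), DifferentiableAt ℝ w p
  derivL2 : MemLp (deriv w) 2 (volume.restrict (Ioi 0))

/-- A space-time function of class `E(I)`: a physical function `u` together with its
profile `w(t,p) = e^{-itp³} û(t,p)`. -/
structure ESol (I : Set ℝ) where
  u : ℝ → ℝ → ℝ
  w : ℝ → ℝ → ℂ
  memE : ∀ t ∈ I, MemE (w t)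
  isPhys : ∀ t ∈ I, IsPhys (w t) t (u t)
  contt : ContinuousOn (fun q : ℝ × ℝ => w q.1 q.2) (I ×ˢ Ioi 0)

/-- Finiteness of the `E(I)` norm: `sup_{t ∈ I} ‖u(t)‖_{E(t)} < ∞`. -/
def FiniteEnorm (I : Set ℝ) (sol : ESol I) : Prop :=
  BddAbove ((fun t => EnormP t (sol.w t)) '' I)

/-- Time derivative of a test function. -/
def dt1 (φ : ℝ → ℝ → ℝ) : ℝ → ℝ → ℝ := fun t x => deriv (fun s => φ s x) t

/-- Space derivative of a test function. -/
def dx1 (φ : ℝ → ℝ → ℝ) : ℝ → ℝ → ℝ := fun t x => deriv (fun y => φ t y) x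

/-- `u` is a distributional solution of `∂ₜ u + ∂ₓ³ u + ε ∂ₓ(u³) = 0` on `I × ℝ`. -/
def IsSolOn (ε : ℝ) (u : ℝ → ℝ → ℝ) (I : Set ℝ) : Prop :=
  ∀ φ : ℝ → ℝ → ℝ,
    ContDiff ℝ (⊤ : ℕ∞) (fun q : ℝ × ℝ => φ q.1 q.2) →
    HasCompactSupport (fun q : ℝ × ℝ => φ q.1 q.2) →
    tsupport (fun q : ℝ × ℝ => φ q.1 q.2) ⊆ interior I ×ˢ univ →
    (∫ q : ℝ × ℝ,
      (u q.1 q.2 * (dt1 φ q.1 q.2 + dx1 (dx1 (dx1 φ)) q.1 q.2)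
        + ε * u q.1 q.2 ^ 3 * dx1 φ q.1 q.2)) = 0

/-- Self-similar solution: `S(t,x) = t^{-1/3} V(t^{-1/3} x)`. -/
def SelfSimilar {I : Set ℝ} (S : ESol I) : Prop :=
  ∃ V : ℝ → ℝ, ∀ t ∈ I, ∀ x : ℝ,
    S.u t x = t ^ (-(1 / 3 : ℝ)) * V (t ^ (-(1 / 3 : ℝ)) * x)

/-- The Fourier transform at time 1 recovered from the profile: `û(1,p) = e^{ip³} ũ(1,p)`. -/
def hatAtOne (w : ℝ → ℂ) : ℝ → ℂ := fun p => Complex.exp (Complex.I * ((p ^ 3 : ℝ) : ℂ)) * w p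

/-- The Fourier transforms at time 1 have the same limit at frequency `0⁺`. -/
def SameZeroLimit (w₁ w₂ : ℝ → ℂ) : Prop :=
  ∃ c : ℂ, Tendsto (hatAtOne w₁) (𝓝[>] (0 : ℝ)) (𝓝 c) ∧
    Tendsto (hatAtOne w₂) (𝓝[>] (0 : ℝ)) (𝓝 c)

/-- Truncated Airy–Fock integral. -/
def AiP (z R : ℝ) : ℂ :=
  ((1 / Real.pi : ℝ) : ℂ) *
    ∫ p in Ioc (0 : ℝ) R, Complex.exp (Complex.I * ((p * z + p ^ 3 : ℝ) : ℂ))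

/-- The Airy–Fock function `Ai(z) = (1/π)∫_0^∞ e^{i(pz+p³)} dp` (improper integral). -/
def AiFock (z : ℝ) : ℂ := limUnder atTop fun R => AiP z R

end MKdVPaper

/-! Let `V`, `V'` be the profiles at time `1`, and `D = V - V'`. Testing the equation against
`a(t) ψ(t^{-1/3} x)` shows that `V` and `V'` solve a profile equation in the sense of
distributions; subtracting and integrating once, `D'' = (x/3 - q) D + β`, where `β` is a constant
and `q = ε (V² + V V' + V'²)`. Stationary phase bounds `V` and `V'` by `δ ⟨x⟩^{-1/4}`, so that
`q = O(δ² ⟨x⟩^{-1/2})`. The equality of the limits at zero frequency enters through a primitive `G`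
of `D`: the profile of `D` divided by `i p` is square integrable by Hardy's inequality, hence so is
`G` by Plancherel's identity. This forces `β = 0`. Then a quadratic functional of `(G, D, D')` is
nondecreasing, because `q` is small, and its averages over dyadic intervals tend to zero at both
ends of the line. So it vanishes identically, and `D = 0`. -/

namespace MKdVPaper

/-! ### Averages over dyadic intervals -/

/-- The average of `f` over `[R, 2R]`. -/
def dyadicAverage (f : ℝ → ℝ) (R : ℝ) : ℝ := R⁻¹ * ∫ x in R..2 * R, f x

lemma tendsto_dyadicAverage_zero {f : ℝ → ℝ} (hf : Tendsto f atTop (𝓝 0)) :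
    Tendsto (dyadicAverage f) atTop (𝓝 0) := by
  refine Metric.tendsto_nhds.2 fun η hη => ?_
  have hsmall : ∀ᶠ R in atTop, ∀ x ≥ R, ‖f x‖ ≤ η / 2 :=
    eventually_forall_ge_atTop.2
      ((by simpa using hf.norm : Tendsto _ _ (𝓝 (0 : ℝ))).eventually_le_const (half_pos hη))
  filter_upwards [hsmall, eventually_gt_atTop 0] with R hR hR0
  have hint : ‖∫ x in R..2 * R, f x‖ ≤ η / 2 * |2 * R - R| :=
    intervalIntegral.norm_integral_le_of_norm_le_const fun x hx =>
      hR x (uIoc_of_le (show R ≤ 2 * R by linarith) ▸ hx).1.le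
  rw [show 2 * R - R = R by ring, abs_of_pos hR0] at hint
  rw [dist_zero_right, dyadicAverage, norm_mul, Real.norm_of_nonneg (inv_nonneg.2 hR0.le),
    inv_mul_lt_iff₀ hR0]
  nlinarith

lemma tendsto_dyadicAverage_mul_of_integrable {g : ℝ → ℝ} (hg : Integrable g) :
    Tendsto (dyadicAverage fun x => x * g x) atTop (𝓝 0) := by
  have hprim : Tendsto (fun R : ℝ => ∫ x in (0 : ℝ)..R, ‖g x‖) atTop (𝓝 (∫ x in Ioi 0, ‖g x‖)) :=
    intervalIntegral_tendsto_integral_Ioi 0 hg.norm.integrableOn tendsto_id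
  have hdyadic : Tendsto (fun R : ℝ => ∫ x in R..2 * R, ‖g x‖) atTop (𝓝 0) := by
    have h := (hprim.comp (tendsto_id.const_mul_atTop two_pos)).sub hprim
    rw [sub_self] at h
    exact h.congr fun R => intervalIntegral.integral_interval_sub_left
      hg.norm.intervalIntegrable hg.norm.intervalIntegrable
  refine squeeze_zero_norm' ?_ (by simpa only [mul_zero] using hdyadic.const_mul 2)
  filter_upwards [eventually_gt_atTop 0] with R hR
  have hle : R ≤ 2 * R := by linarith
  have hint : ‖∫ x in R..2 * R, x * g x‖ ≤ ∫ x in R..2 * R, 2 * R * ‖g x‖ := by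
    refine intervalIntegral.norm_integral_le_of_norm_le hle (ae_of_all _ fun x hx => ?_)
      (hg.norm.const_mul _).intervalIntegrable
    rw [norm_mul, Real.norm_of_nonneg (hR.trans hx.1).le]
    exact mul_le_mul_of_nonneg_right hx.2 (norm_nonneg _)
  rw [intervalIntegral.integral_const_mul] at hint
  rw [dyadicAverage, norm_mul, Real.norm_of_nonneg (inv_nonneg.2 hR.le), inv_mul_le_iff₀ hR]
  linarith

lemma tendsto_dyadicAverage_deriv {H H' : ℝ → ℝ} (hH : ∀ x, HasDerivAt H (H' x) x)
    (hH' : Continuous H') (hlim : Tendsto (fun x => H x / x) atTop (𝓝 0)) :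
    Tendsto (dyadicAverage H') atTop (𝓝 0) := by
  have h := ((hlim.comp (tendsto_id.const_mul_atTop two_pos)).const_mul 2).sub hlim
  rw [mul_zero, sub_zero] at h
  refine h.congr' ?_
  filter_upwards [eventually_gt_atTop 0] with R hR
  rw [dyadicAverage, intervalIntegral.integral_eq_sub_of_hasDerivAt (fun x _ => hH x)
    (hH'.intervalIntegrable _ _)]
  simp only [Function.comp_apply, id_eq]
  field_simp

lemma nonpos_of_monotone_of_tendsto_dyadicAverage {Φ : ℝ → ℝ} (hΦ : Monotone Φ)
    (hlim : Tendsto (dyadicAverage Φ) atTop (𝓝 0)) (a : ℝ) : Φ a ≤ 0 := by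
  refine ge_of_tendsto hlim ?_
  filter_upwards [eventually_ge_atTop a, eventually_gt_atTop 0] with R hRa hR
  have h := intervalIntegral.integral_mono_on (μ := volume) (show R ≤ 2 * R by linarith)
    (f := fun _ => Φ a) intervalIntegrable_const hΦ.intervalIntegrable
    fun x hx => hΦ (hRa.trans hx.1)
  rw [intervalIntegral.integral_const, smul_eq_mul, show 2 * R - R = R by ring] at h
  rwa [dyadicAverage, le_inv_mul_iff₀ hR]

lemma nonpos_of_monotone_of_eq_mul_add_deriv_add {Φ g H H' E : ℝ → ℝ} (hΦ : Monotone Φ)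
    (hdecomp : ∀ x, Φ x = x * g x + H' x + E x) (hgc : Continuous g) (hg : Integrable g)
    (hH : ∀ x, HasDerivAt H (H' x) x) (hH' : Continuous H')
    (hHlim : Tendsto (fun x => H x / x) atTop (𝓝 0)) (hEc : Continuous E)
    (hE : Tendsto E atTop (𝓝 0)) (a : ℝ) : Φ a ≤ 0 := by
  refine nonpos_of_monotone_of_tendsto_dyadicAverage hΦ ?_ a
  have h := ((tendsto_dyadicAverage_mul_of_integrable hg).add
    (tendsto_dyadicAverage_deriv hH hH' hHlim)).add (tendsto_dyadicAverage_zero hE)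
  rw [add_zero, add_zero] at h
  refine h.congr fun R => ?_
  simp only [dyadicAverage, hdecomp]
  rw [intervalIntegral.integral_add, intervalIntegral.integral_add]
  · ring
  all_goals exact Continuous.intervalIntegrable (by fun_prop) _ _

lemma eq_zero_of_monotone_of_eq_mul_add_deriv_add {Φ g H H' E : ℝ → ℝ} (hΦ : Monotone Φ)
    (hdecomp : ∀ x, Φ x = x * g x + H' x + E x) (hgc : Continuous g) (hg : Integrable g)
    (hH : ∀ x, HasDerivAt H (H' x) x) (hH' : Continuous H')
    (hHlim : Tendsto (fun x => H x / x) (cocompact ℝ) (𝓝 0)) (hEc : Continuous E)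
    (hE : Tendsto E (cocompact ℝ) (𝓝 0)) (a : ℝ) : Φ a = 0 := by
  rw [cocompact_eq_atBot_atTop, tendsto_sup] at hHlim hE
  refine le_antisymm (nonpos_of_monotone_of_eq_mul_add_deriv_add hΦ hdecomp hgc hg hH hH'
    hHlim.2 hEc hE.2 a) ?_
  have h := nonpos_of_monotone_of_eq_mul_add_deriv_add (Φ := fun x => -Φ (-x))
    (g := fun x => g (-x)) (H := fun x => H (-x)) (H' := fun x => -H' (-x))
    (E := fun x => -E (-x)) (fun x y hxy => neg_le_neg (hΦ (neg_le_neg hxy)))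
    (fun x => by rw [hdecomp]; ring) (by fun_prop) hg.comp_neg
    (fun x => by simpa [Function.comp_def] using (hH (-x)).comp x (hasDerivAt_neg x))
    (by fun_prop)
    (by simpa [Function.comp_def, div_neg] using (hHlim.1.comp tendsto_neg_atTop_atBot).neg)
    (by fun_prop)
    (by simpa [Function.comp_def] using (hE.1.comp tendsto_neg_atTop_atBot).neg) (-a)
  simpa using h

/-! ### Perturbed Airy equations -/

/-- The weight `⟨x⟩⁻¹`. -/
def weight (x : ℝ) : ℝ := (jap x)⁻¹

lemma weight_pos (x : ℝ) : 0 < weight x := inv_pos.2 (Real.sqrt_pos.2 (by positivity))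

lemma weight_le_one (x : ℝ) : weight x ≤ 1 :=
  inv_le_one_of_one_le₀ (Real.one_le_sqrt.2 (by nlinarith [sq_nonneg x]))

lemma abs_mul_weight_le_one (x : ℝ) : |x| * weight x ≤ 1 := by
  rw [weight, ← div_eq_mul_inv, div_le_one (inv_pos.1 (weight_pos x))]
  exact Real.abs_le_sqrt (by linarith)

lemma hasDerivAt_weight (x : ℝ) : HasDerivAt weight (-x * weight x ^ 3) x := by
  have hpos : 0 < 1 + x ^ 2 := by positivity
  have hne := (Real.sqrt_pos.2 hpos).ne'
  refine ((((hasDerivAt_pow 2 x).const_add 1).sqrt hpos.ne').inv hne).congr_deriv ?_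
  simp only [weight, jap]
  field_simp
  norm_num

lemma continuous_weight : Continuous weight :=
  continuous_iff_continuousAt.2 fun x => (hasDerivAt_weight x).continuousAt

lemma energy_deriv_lower_bound {x D D₁ G q φ : ℝ} (hφ0 : 0 ≤ φ) (hφ1 : φ ≤ 1)
    (hxφ : |x| * φ ≤ 1) (hq : 2052 * q ^ 2 ≤ φ) :
    D ^ 2 * φ / 8 ≤
      (D * (D * φ) + G * (D₁ * φ + D * (-x * φ ^ 3)))
      + 1 / 12 * (D₁ * (D₁ * φ ^ 2) + D * ((x * D / 3 - q * D) * φ ^ 2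
        + D₁ * (2 * φ * (-x * φ ^ 3))))
      + 56 * (1 / 2 * G ^ 2 + G * (3 * q * D)) := by
  set y := x * φ with hy
  have hy1 : |y| ≤ 1 := by rwa [abs_mul, abs_of_nonneg hφ0]
  have hy2 : y ^ 2 ≤ 1 := (sq_le_one_iff_abs_le_one y).2 hy1
  have hφ4 : φ ^ 4 ≤ φ := pow_le_of_le_one hφ0 hφ1 (by norm_num)
  have hD := sq_nonneg D
  have hDφ := mul_nonneg hD hφ0
  have hqD : q ^ 2 * D ^ 2 * 2052 ≤ D ^ 2 * φ := by nlinarith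
  have hyφ : D ^ 2 * y ^ 2 * φ ^ 4 ≤ D ^ 2 * φ := by
    have := mul_le_mul hy2 hφ4 (by positivity) zero_le_one
    nlinarith
  have hGD₁ : -(G * (D₁ * φ)) ≤ D₁ ^ 2 * φ ^ 2 / 48 + 12 * G ^ 2 := by
    nlinarith [sq_nonneg (D₁ * φ + 24 * G)]
  have hGD : G * D * y * φ ^ 2 ≤ D ^ 2 * φ / 8 + 2 * G ^ 2 := by
    nlinarith [sq_nonneg (D * y * φ ^ 2 - 4 * G)]
  have hDD : -(D ^ 2 * y * φ) ≤ D ^ 2 * φ := by nlinarith [(abs_le.1 hy1).1]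
  have hqDD : q * D ^ 2 * φ ^ 2 ≤ D ^ 2 * φ / 2 + q ^ 2 * D ^ 2 / 2 := by
    nlinarith [mul_nonneg hD (sq_nonneg (φ ^ 2 - q))]
  have hDD₁ : 2 * D * D₁ * y * φ ^ 3 ≤ D₁ ^ 2 * φ ^ 2 / 4 + 4 * (D ^ 2 * φ) := by
    nlinarith [sq_nonneg (D₁ * φ - 4 * (D * y * φ ^ 2))]
  have hGqD : -(G * (3 * q * D)) ≤ G ^ 2 / 4 + 9 * (q ^ 2 * D ^ 2) := by
    nlinarith [sq_nonneg (G + 6 * q * D)]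
  have hD₁φ : 0 ≤ D₁ ^ 2 * φ ^ 2 := by positivity
  have hexpand : (D * (D * φ) + G * (D₁ * φ + D * (-x * φ ^ 3)))
      + 1 / 12 * (D₁ * (D₁ * φ ^ 2) + D * ((x * D / 3 - q * D) * φ ^ 2
        + D₁ * (2 * φ * (-x * φ ^ 3))))
      + 56 * (1 / 2 * G ^ 2 + G * (3 * q * D))
      = D ^ 2 * φ + G * (D₁ * φ) - G * D * y * φ ^ 2
        + 1 / 12 * (D₁ ^ 2 * φ ^ 2 + D ^ 2 * y * φ / 3 - q * D ^ 2 * φ ^ 2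
          - 2 * D * D₁ * y * φ ^ 3)
        + 56 * (1 / 2 * G ^ 2 + G * (3 * q * D)) := by rw [hy]; ring
  rw [hexpand]
  linarith

/-- `G` is a primitive of a solution `D` of the perturbed Airy equation
`D'' = (x/3 - q) D + β`, and `D₁ = D'`. -/
structure IsPerturbedAiry (q : ℝ → ℝ) (β : ℝ) (G D D₁ : ℝ → ℝ) : Prop where
  hasDerivAt_primitive : ∀ x, HasDerivAt G (D x) x
  hasDerivAt : ∀ x, HasDerivAt D (D₁ x) x
  hasDerivAt_deriv : ∀ x, HasDerivAt D₁ (x * D x / 3 - q x * D x + β) x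

/-- A Lyapunov functional, increasing along solutions of `D'' = (x/3 - q) D` when `q` is small. The
last bracket has derivative `G² / 2 + 3 q G D`; its coefficient lets it absorb the errors made by
the first two terms, whose derivatives contain `⟨x⟩⁻¹ D²` and `⟨x⟩⁻² D'²`. -/
def airyEnergy (G D D₁ : ℝ → ℝ) (x : ℝ) : ℝ :=
  G x * (D x * weight x) + 1 / 12 * (D x * (D₁ x * weight x ^ 2))
    + 56 * (1 / 2 * (x * G x ^ 2) - 3 * (G x * D₁ x) + 3 / 2 * D x ^ 2)

/-- The function whose derivative is the oscillating part of `airyEnergy`. -/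
def airyEnergyPrimitive (G D : ℝ → ℝ) (x : ℝ) : ℝ :=
  1 / 24 * (D x * weight x) ^ 2 - 168 * (G x * D x)

/-- The part of `airyEnergy` that vanishes at infinity. -/
def airyEnergyRemainder (G D : ℝ → ℝ) (x : ℝ) : ℝ :=
  G x * weight x * D x + (1 / 12 * (x * weight x) * weight x ^ 3 + 252) * D x ^ 2

lemma abs_le_mul_one_add_abs_of_hasDerivAt {G D : ℝ → ℝ} {K : ℝ}
    (hG : ∀ x, HasDerivAt G (D x) x) (hK : ∀ x, |D x| ≤ K) (x : ℝ) :
    |G x| ≤ (|G 0| + K) * (1 + |x|) := by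
  have hK0 : 0 ≤ K := (abs_nonneg _).trans (hK 0)
  have hlip := convex_univ.norm_image_sub_le_of_norm_hasDerivWithin_le (f := G)
    (fun y _ => (hG y).hasDerivWithinAt) (fun y _ => hK y) (mem_univ 0) (mem_univ x)
  simp only [Real.norm_eq_abs, sub_zero] at hlip
  have htri : |G x| ≤ |G x - G 0| + |G 0| := by simpa using abs_add_le (G x - G 0) (G 0)
  nlinarith [abs_nonneg x, abs_nonneg (G 0), mul_nonneg (abs_nonneg (G 0)) (abs_nonneg x)]

lemma tendsto_airyEnergyRemainder {G D : ℝ → ℝ} {C : ℝ} (hG : ∀ x, |G x| ≤ C * (1 + |x|))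
    (hD : Tendsto D (cocompact ℝ) (𝓝 0)) :
    Tendsto (airyEnergyRemainder G D) (cocompact ℝ) (𝓝 0) := by
  have hC : 0 ≤ C := by simpa using (abs_nonneg _).trans (hG 0)
  have hlim : Tendsto (fun x => 2 * C * |D x| + 253 * D x ^ 2) (cocompact ℝ) (𝓝 0) := by
    simpa using (hD.abs.const_mul (2 * C)).add ((hD.pow 2).const_mul 253)
  refine squeeze_zero_norm (fun x => (norm_add_le _ _).trans (add_le_add ?_ ?_)) hlim
  · rw [norm_mul, norm_mul, Real.norm_of_nonneg (weight_pos x).le]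
    refine mul_le_mul_of_nonneg_right ?_ (norm_nonneg _)
    calc |G x| * weight x ≤ C * (1 + |x|) * weight x :=
          mul_le_mul_of_nonneg_right (hG x) (weight_pos x).le
      _ = C * (weight x + |x| * weight x) := by ring
      _ ≤ C * (1 + 1) := by gcongr; exacts [weight_le_one x, abs_mul_weight_le_one x]
      _ = 2 * C := by ring
  · rw [norm_mul, Real.norm_of_nonneg (sq_nonneg (D x))]
    refine mul_le_mul_of_nonneg_right ((norm_add_le _ _).trans ?_) (sq_nonneg _)
    have hpow := mul_le_mul (abs_mul_weight_le_one x)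
      (pow_le_one₀ (n := 3) (weight_pos x).le (weight_le_one x))
      (pow_nonneg (weight_pos x).le 3) zero_le_one
    rw [norm_mul, norm_mul, norm_mul, Real.norm_of_nonneg (weight_pos x).le,
      Real.norm_of_nonneg (pow_pos (weight_pos x) 3).le, Real.norm_eq_abs x]
    norm_num
    linarith

lemma tendsto_airyEnergyPrimitive_div {G D : ℝ → ℝ} {C : ℝ} (hG : ∀ x, |G x| ≤ C * (1 + |x|))
    (hD : Tendsto D (cocompact ℝ) (𝓝 0)) :
    Tendsto (fun x => airyEnergyPrimitive G D x / x) (cocompact ℝ) (𝓝 0) := by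
  have hC : 0 ≤ C := by simpa using (abs_nonneg _).trans (hG 0)
  have hlim : Tendsto (fun x => |D x| ^ 2 + 336 * C * |D x|) (cocompact ℝ) (𝓝 0) := by
    simpa using (hD.abs.pow 2).add (hD.abs.const_mul (336 * C))
  refine squeeze_zero_norm' ?_ hlim
  filter_upwards [(tendsto_norm_cocompact_atTop (E := ℝ)).eventually_ge_atTop 1] with x hx
  rw [Real.norm_eq_abs] at hx
  rw [Real.norm_eq_abs, abs_div, div_le_iff₀ (by linarith)]
  have habs : |airyEnergyPrimitive G D x| ≤ 1 / 24 * |D x * weight x| ^ 2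
      + 168 * (|G x| * |D x|) :=
    (abs_sub _ _).trans (le_of_eq (by simp [abs_mul]))
  have hDw : |D x * weight x| ≤ |D x| := by
    rw [abs_mul, abs_of_pos (weight_pos x)]
    exact mul_le_of_le_one_right (abs_nonneg _) (weight_le_one x)
  have hDw2 : |D x * weight x| ^ 2 ≤ |D x| ^ 2 := by gcongr
  have hGD : |G x| * |D x| ≤ C * (2 * |x|) * |D x| :=
    mul_le_mul_of_nonneg_right ((hG x).trans (by gcongr; linarith)) (abs_nonneg _)
  nlinarith [sq_nonneg (|D x|)]

namespace IsPerturbedAiry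

variable {q G D D₁ : ℝ → ℝ} {β K : ℝ}

lemma continuous_primitive (h : IsPerturbedAiry q β G D D₁) : Continuous G :=
  continuous_iff_continuousAt.2 fun x => (h.hasDerivAt_primitive x).continuousAt

protected lemma continuous (h : IsPerturbedAiry q β G D D₁) : Continuous D :=
  continuous_iff_continuousAt.2 fun x => (h.hasDerivAt x).continuousAt

lemma continuous_deriv (h : IsPerturbedAiry q β G D D₁) : Continuous D₁ :=
  continuous_iff_continuousAt.2 fun x => (h.hasDerivAt_deriv x).continuousAt

lemma hasDerivAt_airyEnergy (h : IsPerturbedAiry q 0 G D D₁) (x : ℝ) :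
    HasDerivAt (airyEnergy G D D₁)
      ((D x * (D x * weight x) + G x * (D₁ x * weight x + D x * (-x * weight x ^ 3)))
      + 1 / 12 * (D₁ x * (D₁ x * weight x ^ 2)
        + D x * ((x * D x / 3 - q x * D x) * weight x ^ 2
          + D₁ x * (2 * weight x * (-x * weight x ^ 3))))
      + 56 * (1 / 2 * G x ^ 2 + G x * (3 * q x * D x))) x := by
  have hG := h.hasDerivAt_primitive x
  have hD := h.hasDerivAt x
  have hD₁ := h.hasDerivAt_deriv x
  have hw := hasDerivAt_weight x
  have h₁ := hG.mul (hD.mul hw)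
  have h₂ := (hD.mul (hD₁.mul (hw.pow 2))).const_mul (1 / 12)
  have h₃ := ((((hasDerivAt_id x).mul (hG.pow 2)).const_mul (1 / 2)).sub
    ((hG.mul hD₁).const_mul 3)).add ((hD.pow 2).const_mul (3 / 2))
  refine ((h₁.add h₂).add (h₃.const_mul 56)).congr_deriv ?_
  simp only [Pi.pow_apply, Pi.mul_apply, id_eq]
  push_cast
  ring

lemma hasDerivAt_airyEnergyPrimitive (h : IsPerturbedAiry q β G D D₁) (x : ℝ) :
    HasDerivAt (airyEnergyPrimitive G D)
      (1 / 12 * (D x * weight x) * (D₁ x * weight x + D x * (-x * weight x ^ 3))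
        - 168 * (D x * D x + G x * D₁ x)) x := by
  refine (((((h.hasDerivAt x).mul (hasDerivAt_weight x)).pow 2).const_mul (1 / 24)).sub
    (((h.hasDerivAt_primitive x).mul (h.hasDerivAt x)).const_mul 168)).congr_deriv ?_
  simp only [Pi.mul_apply]
  push_cast
  ring

lemma airyEnergy_eq_zero (h : IsPerturbedAiry q 0 G D D₁) (hmono : Monotone (airyEnergy G D D₁))
    (hK : ∀ x, |D x| ≤ K) (hD : Tendsto D (cocompact ℝ) (𝓝 0))
    (hG : Integrable fun x => G x ^ 2) (x : ℝ) : airyEnergy G D D₁ x = 0 := by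
  have hGc := h.continuous_primitive
  have hDc := h.continuous
  have hD₁c := h.continuous_deriv
  have hwc := continuous_weight
  have hgrowth := abs_le_mul_one_add_abs_of_hasDerivAt h.hasDerivAt_primitive hK
  refine eq_zero_of_monotone_of_eq_mul_add_deriv_add (g := fun x => 28 * G x ^ 2)
    (E := airyEnergyRemainder G D) hmono (fun x => ?_) (by fun_prop) (hG.const_mul 28)
    h.hasDerivAt_airyEnergyPrimitive (by fun_prop) (tendsto_airyEnergyPrimitive_div hgrowth hD)
    ?_ (tendsto_airyEnergyRemainder hgrowth hD) x
  · simp only [airyEnergy, airyEnergyRemainder]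
    ring
  · unfold airyEnergyRemainder
    fun_prop

theorem eq_zero (h : IsPerturbedAiry q 0 G D D₁) (hq : ∀ x, 2052 * q x ^ 2 ≤ weight x)
    (hK : ∀ x, |D x| ≤ K) (hD : Tendsto D (cocompact ℝ) (𝓝 0))
    (hG : Integrable fun x => G x ^ 2) (x : ℝ) : D x = 0 := by
  have hlow (x : ℝ) := energy_deriv_lower_bound (D := D x) (D₁ := D₁ x) (G := G x)
    (weight_pos x).le (weight_le_one x) (abs_mul_weight_le_one x) (hq x)
  have hmono : Monotone (airyEnergy G D D₁) :=
    monotone_of_hasDerivAt_nonneg h.hasDerivAt_airyEnergy fun x =>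
      le_trans (by have := weight_pos x; positivity) (hlow x)
  have hzero : airyEnergy G D D₁ = fun _ => 0 := funext (h.airyEnergy_eq_zero hmono hK hD hG)
  have hderiv := (hzero ▸ h.hasDerivAt_airyEnergy x).unique (hasDerivAt_const x 0)
  have hx := hlow x
  rw [hderiv] at hx
  have hsq : D x ^ 2 ≤ 0 := nonpos_of_mul_nonpos_left (by linarith) (weight_pos x)
  exact pow_eq_zero_iff two_ne_zero |>.1 (le_antisymm hsq (sq_nonneg _))

end IsPerturbedAiry

lemma tendsto_zero_of_sq_integrable {G D : ℝ → ℝ} {K : ℝ} (hG : ∀ x, HasDerivAt G (D x) x)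
    (hDc : Continuous D) (hK : ∀ x, |D x| ≤ K) (hGi : Integrable fun x => G x ^ 2) :
    Tendsto G atTop (𝓝 0) := by
  -- `G³` has an integrable derivative, so it converges; a nonzero limit would contradict `G ∈ L²`.
  have hcube (x : ℝ) : HasDerivAt (fun y => G y ^ 3) (3 * (G x ^ 2 * D x)) x := by
    refine ((hG x).pow 3).congr_deriv ?_
    push_cast
    ring
  have hint : Integrable fun x => 3 * (G x ^ 2 * D x) :=
    (hGi.mul_bdd hDc.aestronglyMeasurable (ae_of_all _ hK)).const_mul 3
  obtain ⟨L, hL⟩ : ∃ L, Tendsto (fun y => G y ^ 3) atTop (𝓝 L) :=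
    ⟨_, tendsto_limUnder_of_hasDerivAt_of_integrableOn_Ioi (a := 0) (fun x _ => hcube x)
      hint.integrableOn⟩
  have hsq : Tendsto (fun y => G y ^ 2) atTop (𝓝 ((L ^ 2) ^ (1 / 3 : ℝ))) := by
    refine ((hL.pow 2).rpow_const (p := 1 / 3) (Or.inr (by norm_num))).congr fun y => ?_
    rw [← pow_mul, show 3 * 2 = 2 * 3 by norm_num, pow_mul, ← Real.rpow_natCast _ 3,
      ← Real.rpow_mul (sq_nonneg _)]
    norm_num
  have hzero : (L ^ 2) ^ (1 / 3 : ℝ) = 0 :=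
    (hGi.integrableAtFilter atTop).eq_zero_of_tendsto (fun s hs => by
      obtain ⟨a, ha⟩ := mem_atTop_sets.1 hs
      exact measure_mono_top (fun x hx => ha x hx) Real.volume_Ici) hsq
  rw [hzero] at hsq
  have habs := hsq.sqrt
  simp only [Real.sqrt_sq_eq_abs, Real.sqrt_zero] at habs
  exact (tendsto_zero_iff_abs_tendsto_zero _).2 habs

lemma tendsto_div_id_of_tendsto_deriv {f f' : ℝ → ℝ} {L : ℝ} (hf : ∀ x, HasDerivAt f (f' x) x)
    (hf' : Tendsto f' atTop (𝓝 L)) : Tendsto (fun x => f x / x) atTop (𝓝 L) := by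
  refine Metric.tendsto_nhds.2 fun η hη => ?_
  obtain ⟨M, hM⟩ := Metric.tendsto_atTop.1 hf' (η / 4) (by positivity)
  have hbase : Tendsto (fun x => |f M - L * M| / x) atTop (𝓝 0) :=
    tendsto_const_nhds.div_atTop tendsto_id
  filter_upwards [hbase.eventually_le_const (show 0 < η / 4 by positivity), eventually_ge_atTop M,
    eventually_ge_atTop |M|, eventually_gt_atTop 0] with x hx hMx hMx' hx0
  have hmvt := (convex_Ici M).norm_image_sub_le_of_norm_hasDerivWithin_le
    (f := fun y => f y - L * y) (C := η / 4)
    (fun y _ => ((hf y).sub ((hasDerivAt_id y).const_mul L)).hasDerivWithinAt)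
    (fun y hy => by simpa [Real.dist_eq] using (hM y hy).le) self_mem_Ici hMx
  rw [Real.norm_eq_abs, Real.norm_of_nonneg (by linarith : 0 ≤ x - M)] at hmvt
  rw [div_le_iff₀ hx0] at hx
  have htri := abs_add_le (f x - L * x - (f M - L * M)) (f M - L * M)
  rw [sub_add_cancel] at htri
  rw [Real.dist_eq, div_sub' hx0.ne', abs_div, abs_of_pos hx0, div_lt_iff₀ hx0, mul_comm x L]
  nlinarith [neg_abs_le M]

namespace IsPerturbedAiry

variable {q G D D₁ : ℝ → ℝ} {β K : ℝ}

/- `D₁ - x G / 3` has derivative `β - q D - G / 3 → β`, so `D₁ ∼ β x`; but `D₁` is small at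
suitable points of each interval `(x, x + 1)`, by the mean value theorem. -/
theorem const_eq_zero (h : IsPerturbedAiry q β G D D₁) (hq : ∀ x, |q x| ≤ 1)
    (hK : ∀ x, |D x| ≤ K) (hD : Tendsto D atTop (𝓝 0)) (hG : Integrable fun x => G x ^ 2) :
    β = 0 := by
  have hG0 := tendsto_zero_of_sq_integrable h.hasDerivAt_primitive h.continuous hK hG
  have hqD : Tendsto (fun x => q x * D x) atTop (𝓝 0) := by
    refine squeeze_zero_norm (fun x => ?_) (by simpa only [abs_zero] using hD.abs)
    rw [norm_mul]
    exact mul_le_of_le_one_left (abs_nonneg _) (hq x)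
  have hP (x : ℝ) : HasDerivAt (fun y => D₁ y - y * G y / 3) (β - q x * D x - G x / 3) x := by
    refine ((h.hasDerivAt_deriv x).sub (((hasDerivAt_id x).mul
      (h.hasDerivAt_primitive x)).div_const 3)).congr_deriv ?_
    simp only [id_eq]
    ring
  have hD₁ : Tendsto (fun x => D₁ x / x) atTop (𝓝 β) := by
    have hlim := (tendsto_div_id_of_tendsto_deriv hP
      ((tendsto_const_nhds.sub hqD).sub (hG0.div_const 3))).add (hG0.div_const 3)
    simp only [sub_zero, zero_div, add_zero] at hlim
    refine hlim.congr' ?_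
    filter_upwards [eventually_ne_atTop 0] with x hx
    field_simp
    ring
  have hmvt (x : ℝ) : ∃ ξ > x, D₁ ξ = D (x + 1) - D x := by
    obtain ⟨ξ, hξ, hDξ⟩ := exists_hasDerivAt_eq_slope D D₁ (lt_add_one x) h.continuous.continuousOn
      fun y _ => h.hasDerivAt y
    exact ⟨ξ, hξ.1, by rw [hDξ]; simp⟩
  choose ξ hξ hD₁ξ using hmvt
  have hξlim : Tendsto ξ atTop atTop := tendsto_atTop_mono (fun x => (hξ x).le) tendsto_id
  have hsmall : Tendsto (fun x => D₁ (ξ x)) atTop (𝓝 0) := by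
    simpa only [hD₁ξ, sub_zero, Function.comp_def, id_eq] using
      (hD.comp (tendsto_atTop_add_const_right atTop 1 tendsto_id)).sub hD
  exact tendsto_nhds_unique (hD₁.comp hξlim) (hsmall.div_atTop hξlim)

end IsPerturbedAiry

/-! ### Oscillatory integrals -/

lemma integral_mul_le_sqrt_mul_sqrt {α : Type*} [MeasurableSpace α] {μ : Measure α} {f g : α → ℝ}
    (hf0 : 0 ≤ᵐ[μ] f) (hg0 : 0 ≤ᵐ[μ] g) (hf : MemLp f 2 μ) (hg : MemLp g 2 μ) :
    ∫ x, f x * g x ∂μ ≤ √(∫ x, f x ^ 2 ∂μ) * √(∫ x, g x ^ 2 ∂μ) := by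
  have h := integral_mul_le_Lp_mul_Lq_of_nonneg Real.HolderConjugate.two_two hf0 hg0
    (by simpa using hf) (by simpa using hg)
  simpa only [Real.rpow_two, Real.sqrt_eq_rpow] using h

lemma ne_zero_of_one_le_mul_abs {ρ y : ℝ} (h : 1 ≤ ρ * |y|) : y ≠ 0 := by
  rintro rfl
  norm_num at h

lemma abs_inv_le_of_one_le_mul_abs {ρ y : ℝ} (h : 1 ≤ ρ * |y|) : |y⁻¹| ≤ ρ := by
  rw [abs_inv]
  exact (inv_le_iff_one_le_mul₀ (abs_pos.2 (ne_zero_of_one_le_mul_abs h))).2 h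

lemma continuousOn_deriv_div_sq {θ θ' : ℝ → ℝ} {s : Set ℝ}
    (hθ : ∀ p ∈ s, HasDerivAt θ (θ' p) p) (hθ' : ContinuousOn θ' s) (hne : ∀ p ∈ s, θ p ≠ 0) :
    ContinuousOn (fun p => θ' p / θ p ^ 2) s :=
  hθ'.div (ContinuousOn.pow (fun p hp => (hθ p hp).continuousAt.continuousWithinAt) 2)
    fun p hp => pow_ne_zero 2 (hne p hp)

lemma integral_deriv_div_sq_le {θ θ' : ℝ → ℝ} {a b ρ : ℝ} (hab : a ≤ b)
    (hθ : ∀ p ∈ Icc a b, HasDerivAt θ (θ' p) p) (hθ' : ContinuousOn θ' (Icc a b))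
    (hρ : ∀ p ∈ Icc a b, 1 ≤ ρ * |θ p|) : ∫ p in a..b, θ' p / θ p ^ 2 ≤ 2 * ρ := by
  have hne (p) (hp : p ∈ Icc a b) := ne_zero_of_one_le_mul_abs (hρ p hp)
  rw [← uIcc_of_le hab] at hθ hθ' hne
  rw [intervalIntegral.integral_eq_sub_of_hasDerivAt (f := fun p => -(θ p)⁻¹)
    (fun p hp => ((hθ p hp).inv (hne p hp)).neg.congr_deriv (by ring))
    (continuousOn_deriv_div_sq hθ hθ' hne).intervalIntegrable]
  linarith [(abs_le.1 (abs_inv_le_of_one_le_mul_abs (hρ a (left_mem_Icc.2 hab)))).2,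
    (abs_le.1 (abs_inv_le_of_one_le_mul_abs (hρ b (right_mem_Icc.2 hab)))).1]

lemma integral_sq_abs_inv_le {θ : ℝ → ℝ} {a b c r : ℝ} (hab : a ≤ b) (hr : 0 < r)
    (hθ : ContinuousOn θ (Icc a b)) (hc : ∀ p ∈ Icc a b, r ≤ |p - c|)
    (hle : ∀ p ∈ Icc a b, |p - c| ≤ r ^ 2 * |θ p|) :
    ∫ p in a..b, (|θ p|⁻¹) ^ 2 ≤ 2 * r ^ 3 := by
  have hlow (p) (hp : p ∈ Icc a b) : 0 < |p - c| := hr.trans_le (hc p hp)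
  have hθpos (p) (hp : p ∈ Icc a b) : 0 < |θ p| :=
    pos_of_mul_pos_right ((hlow p hp).trans_le (hle p hp)) (sq_nonneg r)
  have hθint : ContinuousOn (fun p => (|θ p|⁻¹) ^ 2) (uIcc a b) := by
    rw [uIcc_of_le hab]
    exact (hθ.abs.inv₀ fun p hp => (hθpos p hp).ne').pow 2
  have hcint : ContinuousOn (fun p => r ^ 4 * (1 / (p - c) ^ 2)) (uIcc a b) := by
    rw [uIcc_of_le hab]
    exact continuousOn_const.mul (continuousOn_const.div (by fun_prop) fun p hp =>
      pow_ne_zero 2 (abs_pos.1 (hlow p hp)))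
  calc ∫ p in a..b, (|θ p|⁻¹) ^ 2 ≤ ∫ p in a..b, r ^ 4 * (1 / (p - c) ^ 2) := by
        refine intervalIntegral.integral_mono_on hab hθint.intervalIntegrable
          hcint.intervalIntegrable fun p hp => ?_
        have hinv : |θ p|⁻¹ ≤ r ^ 2 * |p - c|⁻¹ := by
          rw [← div_eq_mul_inv, le_div_iff₀ (hlow p hp), inv_mul_le_iff₀ (hθpos p hp)]
          linarith [hle p hp]
        calc (|θ p|⁻¹) ^ 2 ≤ (r ^ 2 * |p - c|⁻¹) ^ 2 := by gcongr
          _ = r ^ 4 * (1 / (p - c) ^ 2) := by rw [mul_pow, inv_pow, sq_abs]; ring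
    _ = r ^ 4 * ∫ p in a..b, 1 / (p - c) ^ 2 := intervalIntegral.integral_const_mul _ _
    _ ≤ r ^ 4 * (2 * r⁻¹) := by
      gcongr
      exact integral_deriv_div_sq_le hab (fun p _ => (hasDerivAt_id p).sub_const c)
        continuousOn_const fun p hp => (le_inv_mul_iff₀ hr).2 (by simpa using hc p hp)
    _ = 2 * r ^ 3 := by field_simp

lemma norm_integral_mul_deriv_le {u u' v v' : ℝ → ℂ} {a b C : ℝ} (hab : a ≤ b)
    (hu : ∀ p ∈ Icc a b, HasDerivAt u (u' p) p) (hv : ∀ p ∈ Icc a b, HasDerivAt v (v' p) p)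
    (hu' : IntervalIntegrable u' volume a b) (hv' : IntervalIntegrable v' volume a b)
    (huC : ∀ p ∈ Icc a b, ‖u p‖ ≤ C) (hv1 : ∀ p ∈ Icc a b, ‖v p‖ ≤ 1) :
    ‖∫ p in a..b, u p * v' p‖ ≤ 2 * C + ∫ p in a..b, ‖u' p‖ := by
  have hend (p) (hp : p ∈ Icc a b) : ‖u p * v p‖ ≤ C := by
    rw [norm_mul]
    exact (mul_le_of_le_one_right (norm_nonneg _) (hv1 p hp)).trans (huC p hp)
  have hint : ‖∫ p in a..b, u' p * v p‖ ≤ ∫ p in a..b, ‖u' p‖ :=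
    intervalIntegral.norm_integral_le_of_norm_le hab (ae_of_all _ fun p hp => by
      rw [norm_mul]
      exact mul_le_of_le_one_right (norm_nonneg _) (hv1 p (Ioc_subset_Icc_self hp))) hu'.norm
  have ha := hend a (left_mem_Icc.2 hab)
  have hb := hend b (right_mem_Icc.2 hab)
  rw [← uIcc_of_le hab] at hu hv
  rw [intervalIntegral.integral_mul_deriv_eq_deriv_mul hu hv hu' hv']
  linarith [norm_sub_le (u b * v b - u a * v a) (∫ p in a..b, u' p * v p),
    norm_sub_le (u b * v b) (u a * v a)]

lemma norm_cexp_I_mul (y : ℝ) : ‖Complex.exp (Complex.I * y)‖ = 1 := by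
  rw [mul_comm, Complex.norm_exp_ofReal_mul_I]

section NonstationaryPhase

variable {θ θ₁ θ₂ : ℝ → ℝ} {f f' : ℝ → ℂ} {a b ρ M : ℝ}

lemma intervalIntegrable_deriv_inv_smul (hab : a ≤ b)
    (hθ₁ : ∀ p ∈ Icc a b, HasDerivAt θ₁ (θ₂ p) p) (hθ₂ : ContinuousOn θ₂ (Icc a b))
    (hne : ∀ p ∈ Icc a b, θ₁ p ≠ 0) (hf : ContinuousOn f (Icc a b))
    (hf' : IntervalIntegrable f' volume a b) :
    IntervalIntegrable (fun p => (θ₁ p)⁻¹ • f' p + (-θ₂ p / θ₁ p ^ 2) • f p) volume a b := by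
  have hdiv := continuousOn_deriv_div_sq hθ₁ hθ₂ hne
  have hinv : ContinuousOn (fun p => (θ₁ p)⁻¹) (Icc a b) :=
    ContinuousOn.inv₀ (fun p hp => (hθ₁ p hp).continuousAt.continuousWithinAt) hne
  rw [← uIcc_of_le hab] at hdiv hinv hf
  refine (hf'.continuousOn_smul hinv).add (ContinuousOn.intervalIntegrable ?_)
  simp only [neg_div]
  exact hdiv.neg.smul hf

lemma integral_norm_deriv_inv_smul_le (hab : a ≤ b)
    (hθ₁ : ∀ p ∈ Icc a b, HasDerivAt θ₁ (θ₂ p) p) (hθ₂c : ContinuousOn θ₂ (Icc a b))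
    (hθ₂ : ∀ p ∈ Icc a b, 0 ≤ θ₂ p) (hρ : ∀ p ∈ Icc a b, 1 ≤ ρ * |θ₁ p|)
    (hf : ContinuousOn f (Icc a b)) (hM : ∀ p ∈ Icc a b, ‖f p‖ ≤ M)
    (hf' : IntervalIntegrable f' volume a b) :
    ∫ p in a..b, ‖(θ₁ p)⁻¹ • f' p + (-θ₂ p / θ₁ p ^ 2) • f p‖
      ≤ 2 * M * ρ + ∫ p in a..b, ‖f' p‖ * |θ₁ p|⁻¹ := by
  have hM0 : 0 ≤ M := (norm_nonneg _).trans (hM a (left_mem_Icc.2 hab))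
  have hne (p) (hp : p ∈ Icc a b) := ne_zero_of_one_le_mul_abs (hρ p hp)
  have hdiv := continuousOn_deriv_div_sq hθ₁ hθ₂c hne
  have hinv : ContinuousOn (fun p => (θ₁ p)⁻¹) (Icc a b) :=
    ContinuousOn.inv₀ (fun p hp => (hθ₁ p hp).continuousAt.continuousWithinAt) hne
  rw [← uIcc_of_le hab] at hdiv hinv
  have hdivi : IntervalIntegrable (fun p => M * (θ₂ p / θ₁ p ^ 2)) volume a b :=
    hdiv.intervalIntegrable.const_mul M
  have hf'inv : IntervalIntegrable (fun p => ‖f' p‖ * |θ₁ p|⁻¹) volume a b := by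
    simpa only [abs_inv] using hf'.norm.mul_continuousOn hinv.abs
  have hle : ∫ p in a..b, ‖(θ₁ p)⁻¹ • f' p + (-θ₂ p / θ₁ p ^ 2) • f p‖
      ≤ ∫ p in a..b, (‖f' p‖ * |θ₁ p|⁻¹ + M * (θ₂ p / θ₁ p ^ 2)) := by
    refine intervalIntegral.integral_mono_on hab
      (intervalIntegrable_deriv_inv_smul hab hθ₁ hθ₂c hne hf hf').norm (hf'inv.add hdivi)
      fun p hp => (norm_add_le _ _).trans (add_le_add (le_of_eq ?_) ?_)
    · rw [norm_smul, Real.norm_eq_abs, abs_inv, mul_comm]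
    · rw [norm_smul, neg_div, norm_neg, mul_comm,
        Real.norm_of_nonneg (div_nonneg (hθ₂ p hp) (sq_nonneg _))]
      exact mul_le_mul_of_nonneg_right (hM p hp) (div_nonneg (hθ₂ p hp) (sq_nonneg _))
  rw [intervalIntegral.integral_add hf'inv hdivi, intervalIntegral.integral_const_mul] at hle
  linarith [mul_le_mul_of_nonneg_left (integral_deriv_div_sq_le hab hθ₁ hθ₂c hρ) hM0]

/- Write `e^{iθ} f = (f / θ₁) (-i e^{iθ})'` and integrate by parts. -/
theorem norm_integral_cexp_mul_le (hab : a ≤ b) (hθ : ∀ p ∈ Icc a b, HasDerivAt θ (θ₁ p) p)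
    (hθ₁ : ∀ p ∈ Icc a b, HasDerivAt θ₁ (θ₂ p) p) (hθ₂c : ContinuousOn θ₂ (Icc a b))
    (hθ₂ : ∀ p ∈ Icc a b, 0 ≤ θ₂ p) (hρ : ∀ p ∈ Icc a b, 1 ≤ ρ * |θ₁ p|)
    (hf : ∀ p ∈ Icc a b, HasDerivAt f (f' p) p) (hM : ∀ p ∈ Icc a b, ‖f p‖ ≤ M)
    (hf' : IntervalIntegrable f' volume a b) :
    ‖∫ p in a..b, Complex.exp (Complex.I * θ p) * f p‖
      ≤ 4 * M * ρ + ∫ p in a..b, ‖f' p‖ * |θ₁ p|⁻¹ := by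
  have hne (p) (hp : p ∈ Icc a b) := ne_zero_of_one_le_mul_abs (hρ p hp)
  have huIcc := uIcc_of_le hab
  have hθc : ContinuousOn θ (uIcc a b) := huIcc ▸ fun p hp =>
    (hθ p hp).continuousAt.continuousWithinAt
  have hθ₁c : ContinuousOn θ₁ (uIcc a b) := huIcc ▸ fun p hp =>
    (hθ₁ p hp).continuousAt.continuousWithinAt
  have hfc : ContinuousOn f (Icc a b) := fun p hp => (hf p hp).continuousAt.continuousWithinAt
  have hu (p) (hp : p ∈ Icc a b) : HasDerivAt (fun p => (θ₁ p)⁻¹ • f p)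
      ((θ₁ p)⁻¹ • f' p + (-θ₂ p / θ₁ p ^ 2) • f p) p :=
    ((hθ₁ p hp).inv (hne p hp)).smul (hf p hp)
  have hv (p) (hp : p ∈ Icc a b) : HasDerivAt
      (fun p => -Complex.I * Complex.exp (Complex.I * θ p)) (Complex.exp (Complex.I * θ p) * θ₁ p)
      p := by
    refine (((hθ p hp).ofReal_comp.const_mul Complex.I).cexp.const_mul (-Complex.I)).congr_deriv ?_
    linear_combination (-(Complex.exp (Complex.I * θ p) * θ₁ p)) * Complex.I_sq
  have hparts := norm_integral_mul_deriv_le hab hu hv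
    (intervalIntegrable_deriv_inv_smul hab hθ₁ hθ₂c hne hfc hf')
    (ContinuousOn.intervalIntegrable (by fun_prop)) (C := ρ * M) (fun p hp => by
      rw [norm_smul]
      exact mul_le_mul (abs_inv_le_of_one_le_mul_abs (hρ p hp)) (hM p hp) (norm_nonneg _)
        ((abs_nonneg _).trans (abs_inv_le_of_one_le_mul_abs (hρ p hp))))
    fun p _ => by rw [norm_mul, norm_cexp_I_mul, norm_neg, Complex.norm_I, one_mul]
  have hcongr : ∫ p in a..b, Complex.exp (Complex.I * θ p) * f p
      = ∫ p in a..b, (θ₁ p)⁻¹ • f p * (Complex.exp (Complex.I * θ p) * θ₁ p) := by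
    refine intervalIntegral.integral_congr fun p hp => ?_
    have hθ₁p : (θ₁ p : ℂ) ≠ 0 := Complex.ofReal_ne_zero.2 (hne p (huIcc ▸ hp))
    simp only [Complex.real_smul, Complex.ofReal_inv]
    field_simp
  rw [hcongr]
  linarith [integral_norm_deriv_inv_smul_le hab hθ₁ hθ₂c hθ₂ hρ hfc hM hf']

end NonstationaryPhase

/-- The oscillating factor `e^{i(px + p³)}` of the Airy integral. -/
def airyPhase (x p : ℝ) : ℂ := Complex.exp (Complex.I * ((p * x + p ^ 3 : ℝ) : ℂ))

lemma norm_airyPhase (x p : ℝ) : ‖airyPhase x p‖ = 1 := norm_cexp_I_mul _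

lemma continuous_airyPhase (x : ℝ) : Continuous (airyPhase x) := by
  unfold airyPhase
  fun_prop

/-- The decay rate `⟨x⟩^{-1/4}` of the Airy function, in the form `(1 + √(|x|/3))^{-1/2}` adapted
to the stationary point `√(|x|/3)` of the phase. -/
def airyDecay (x : ℝ) : ℝ := √((1 + √(|x| / 3))⁻¹)

lemma airyDecay_sq (x : ℝ) : airyDecay x ^ 2 = (1 + √(|x| / 3))⁻¹ := Real.sq_sqrt (by positivity)

lemma airyDecay_pos (x : ℝ) : 0 < airyDecay x := Real.sqrt_pos.2 (by positivity)

lemma airyDecay_le_one (x : ℝ) : airyDecay x ≤ 1 :=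
  Real.sqrt_le_one.2 (inv_le_one_of_one_le₀ (by linarith [Real.sqrt_nonneg (|x| / 3)]))

lemma tendsto_airyDecay : Tendsto airyDecay (cocompact ℝ) (𝓝 0) := by
  have hden : Tendsto (fun x : ℝ => 1 + √(|x| / 3)) (cocompact ℝ) atTop :=
    tendsto_atTop_add_const_left _ _ (Real.tendsto_sqrt_atTop.comp
      ((tendsto_norm_cocompact_atTop (E := ℝ)).atTop_div_const three_pos))
  have h := (tendsto_inv_atTop_zero.comp hden).sqrt
  rwa [Real.sqrt_zero] at h

lemma airyDecay_pow_four_le (x : ℝ) : airyDecay x ^ 4 ≤ 3 * weight x := by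
  have hjap : jap x ≤ 1 + |x| := by
    rw [jap, Real.sqrt_le_left (by positivity)]
    nlinarith [sq_abs x, abs_nonneg x]
  have hsq : √(|x| / 3) ^ 2 = |x| / 3 := Real.sq_sqrt (by positivity)
  have hpos := inv_pos.1 (weight_pos x)
  rw [show airyDecay x ^ 4 = (airyDecay x ^ 2) ^ 2 by ring, airyDecay_sq, weight, ← div_eq_mul_inv,
    inv_pow, inv_le_comm₀ (by positivity) (by positivity), inv_div, div_le_iff₀ three_pos]
  nlinarith [Real.sqrt_nonneg (|x| / 3)]

/-- `w` is a profile of size at most `δ`: it is bounded by `δ` on `(0,∞)`, and its derivative has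
`L²((0,∞))` norm at most `δ`. -/
structure ProfileBound (w : ℝ → ℂ) (δ : ℝ) : Prop where
  diff : ∀ p, 0 < p → DifferentiableAt ℝ w p
  bound : ∀ p, 0 < p → ‖w p‖ ≤ δ
  integrable : IntegrableOn (fun p => ‖deriv w p‖ ^ 2) (Ioi 0)
  integral_le : ∫ p in Ioi 0, ‖deriv w p‖ ^ 2 ≤ δ ^ 2

lemma abs_sub_le_mul_abs_phase_deriv {x p₀ r p : ℝ} (hp₀ : 0 ≤ p₀) (hx : |x| = 3 * p₀ ^ 2)
    (hr : 0 < r) (hr2 : r ^ 2 * (1 + p₀) = 1) (hp : 0 ≤ p) (hd : r ≤ |p - p₀|) :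
    |p - p₀| ≤ r ^ 2 * |x + 3 * p ^ 2| := by
  have hsub : |p - p₀| ≤ p + p₀ := abs_le.2 ⟨by linarith, by linarith⟩
  have hsum : 1 + p₀ ≤ 3 * (p + p₀) := by
    rcases le_or_gt (1 / 2) p₀ with h | h
    · linarith
    · have : 1 / 2 ≤ r := by
        by_contra! h'
        nlinarith
      linarith
  have hphase : 3 * |p ^ 2 - p₀ ^ 2| ≤ |x + 3 * p ^ 2| := by
    rcases abs_cases x with ⟨hxabs, _⟩ | ⟨hxabs, _⟩
    · have : |p ^ 2 - p₀ ^ 2| ≤ p ^ 2 + p₀ ^ 2 := abs_le.2 ⟨by nlinarith, by nlinarith⟩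
      exact le_trans (by linarith) (le_abs_self _)
    · rw [show x + 3 * p ^ 2 = 3 * (p ^ 2 - p₀ ^ 2) by linarith, abs_mul,
        abs_of_pos (three_pos (α := ℝ))]
  calc |p - p₀| = r ^ 2 * (|p - p₀| * (1 + p₀)) := by linear_combination -|p - p₀| * hr2
    _ ≤ r ^ 2 * (|p - p₀| * (3 * (p + p₀))) := by gcongr
    _ = r ^ 2 * (3 * |p ^ 2 - p₀ ^ 2|) := by
      rw [sq_sub_sq, abs_mul, abs_of_nonneg (by linarith : 0 ≤ p + p₀)]
      ring
    _ ≤ _ := by gcongr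

namespace ProfileBound

variable {w : ℝ → ℂ} {δ x a b : ℝ}

protected lemma nonneg (hw : ProfileBound w δ) : 0 ≤ δ :=
  (norm_nonneg _).trans (hw.bound 1 one_pos)

lemma memLp_deriv (hw : ProfileBound w δ) : MemLp (deriv w) 2 (volume.restrict (Ioi 0)) :=
  (memLp_two_iff_integrable_sq_norm (measurable_deriv w).aestronglyMeasurable).2 hw.integrable

lemma intervalIntegrable_deriv (hw : ProfileBound w δ) (ha : 0 ≤ a) (hab : a ≤ b) :
    IntervalIntegrable (deriv w) volume a b := by
  rw [intervalIntegrable_iff_integrableOn_Ioc_of_le hab]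
  have h : MemLp (deriv w) 2 (volume.restrict (Ioc a b)) :=
    hw.memLp_deriv.mono_measure (Measure.restrict_mono (fun p hp => ha.trans_lt hp.1) le_rfl)
  exact h.integrable one_le_two

lemma integral_norm_deriv_mul_le (hw : ProfileBound w δ) {g : ℝ → ℝ} (ha : 0 ≤ a) (hab : a ≤ b)
    (hg : ContinuousOn g (Icc a b)) (hg0 : ∀ p ∈ Icc a b, 0 ≤ g p) :
    ∫ p in a..b, ‖deriv w p‖ * g p ≤ δ * √(∫ p in a..b, g p ^ 2) := by
  have hsub : Ioc a b ⊆ Ioi 0 := fun p hp => ha.trans_lt hp.1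
  have hgL2 : MemLp g 2 (volume.restrict (Ioc a b)) :=
    (memLp_two_iff_integrable_sq ((hg.mono Ioc_subset_Icc_self).aestronglyMeasurable
      measurableSet_Ioc)).2
      (((hg.pow 2).integrableOn_compact isCompact_Icc).mono_set Ioc_subset_Icc_self)
  have hcs := integral_mul_le_sqrt_mul_sqrt (μ := volume.restrict (Ioc a b))
    (f := fun p => ‖deriv w p‖) (ae_of_all _ fun p => norm_nonneg _)
    ((ae_restrict_iff' measurableSet_Ioc).2 (ae_of_all _ fun p hp =>
      hg0 p (Ioc_subset_Icc_self hp)))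
    (hw.memLp_deriv.mono_measure (Measure.restrict_mono hsub le_rfl)).norm hgL2
  rw [intervalIntegral.integral_of_le hab, intervalIntegral.integral_of_le hab]
  refine hcs.trans (mul_le_mul_of_nonneg_right ((Real.sqrt_le_left hw.nonneg).2 ?_)
    (Real.sqrt_nonneg _))
  exact (setIntegral_mono_set hw.integrable (ae_of_all _ fun p => by positivity)
    (Eventually.of_forall hsub)).trans hw.integral_le

lemma intervalIntegrable (hw : ProfileBound w δ) (x : ℝ) (ha : 0 ≤ a) (hb : 0 ≤ b) :
    IntervalIntegrable (fun p => airyPhase x p * w p) volume a b := by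
  have hIoc (a b : ℝ) (ha : 0 ≤ a) : IntegrableOn (fun p => airyPhase x p * w p) (Ioc a b) := by
    refine Integrable.mono' (g := fun _ => δ) (by simp) ?_ ?_
    · refine ContinuousOn.aestronglyMeasurable (fun p hp => ?_) measurableSet_Ioc
      exact ((continuous_airyPhase x).continuousAt.mul
        (hw.diff p (ha.trans_lt hp.1)).continuousAt).continuousWithinAt
    · refine (ae_restrict_iff' measurableSet_Ioc).2 (ae_of_all _ fun p hp => ?_)
      rw [norm_mul, norm_airyPhase, one_mul]
      exact hw.bound p (ha.trans_lt hp.1)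
  exact ⟨hIoc a b ha, hIoc b a hb⟩

lemma norm_integral_le (hw : ProfileBound w δ) (x : ℝ) (ha : 0 ≤ a) (hab : a ≤ b) :
    ‖∫ p in a..b, airyPhase x p * w p‖ ≤ δ * (b - a) := by
  have h := intervalIntegral.norm_integral_le_of_norm_le_const (a := a) (b := b) (C := δ)
    (f := fun p => airyPhase x p * w p) fun p hp => by
      rw [uIoc_of_le hab] at hp
      rw [norm_mul, norm_airyPhase, one_mul]
      exact hw.bound p (ha.trans_lt hp.1)
  rwa [abs_of_nonneg (by linarith)] at h

lemma norm_integral_le_of_nonstationary_of_pos (hw : ProfileBound w δ) {c r : ℝ} (ha : 0 < a)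
    (hab : a ≤ b) (hr : 0 < r) (hr1 : r ≤ 1) (hc : ∀ p ∈ Icc a b, r ≤ |p - c|)
    (hx : ∀ p ∈ Icc a b, |p - c| ≤ r ^ 2 * |x + 3 * p ^ 2|) :
    ‖∫ p in a..b, airyPhase x p * w p‖ ≤ 6 * δ * r := by
  have hpos (p) (hp : p ∈ Icc a b) : 0 < p := ha.trans_le hp.1
  have hlow (p) (hp : p ∈ Icc a b) : 1 ≤ r * |x + 3 * p ^ 2| := by
    have : r * 1 ≤ r * (r * |x + 3 * p ^ 2|) := by
      linarith [(hc p hp).trans (hx p hp), sq r]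
    exact le_of_mul_le_mul_left this hr
  have hne (p) (hp : p ∈ Icc a b) := ne_zero_of_one_le_mul_abs (hlow p hp)
  have hmain := norm_integral_cexp_mul_le (θ := fun p => p * x + p ^ 3)
    (θ₁ := fun p => x + 3 * p ^ 2) (θ₂ := fun p => 6 * p) (f := w) (f' := deriv w) hab
    (fun p _ => (((hasDerivAt_id p).mul_const x).add (hasDerivAt_pow 3 p)).congr_deriv
      (by norm_num))
    (fun p _ => (((hasDerivAt_pow 2 p).const_mul 3).const_add x).congr_deriv
      (by push_cast; ring))
    (by fun_prop) (fun p hp => by linarith [hpos p hp]) hlow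
    (fun p hp => (hw.diff p (hpos p hp)).hasDerivAt) (fun p hp => hw.bound p (hpos p hp))
    (hw.intervalIntegrable_deriv ha.le hab)
  have hinv : ContinuousOn (fun p => |x + 3 * p ^ 2|⁻¹) (Icc a b) :=
    ContinuousOn.inv₀ (by fun_prop) fun p hp => abs_ne_zero.2 (hne p hp)
  have hcs := hw.integral_norm_deriv_mul_le ha.le hab hinv fun p _ => inv_nonneg.2 (abs_nonneg _)
  have hsqrt : √(∫ p in a..b, (|x + 3 * p ^ 2|⁻¹) ^ 2) ≤ 2 * r :=
    (Real.sqrt_le_left (by positivity)).2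
      ((integral_sq_abs_inv_le hab hr (by fun_prop) hc hx).trans (by nlinarith [sq_nonneg r]))
  refine hmain.trans ?_
  linarith [mul_le_mul_of_nonneg_left hsqrt hw.nonneg]

lemma norm_integral_le_of_nonstationary (hw : ProfileBound w δ) {c r : ℝ} (ha : 0 ≤ a)
    (hab : a ≤ b) (hr : 0 < r) (hr1 : r ≤ 1) (hc : ∀ p ∈ Icc a b, r ≤ |p - c|)
    (hx : ∀ p ∈ Icc a b, |p - c| ≤ r ^ 2 * |x + 3 * p ^ 2|) :
    ‖∫ p in a..b, airyPhase x p * w p‖ ≤ 6 * δ * r := by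
  rcases hab.eq_or_lt with rfl | hlt
  · rw [intervalIntegral.integral_same, norm_zero]
    exact mul_nonneg (mul_nonneg (by norm_num) hw.nonneg) hr.le
  refine ge_of_tendsto (x := 𝓝[>] a) (f := fun s => δ * (s - a) + 6 * δ * r) ?_ ?_
  · refine Tendsto.mono_left ?_ nhdsWithin_le_nhds
    have h : ContinuousAt (fun s => δ * (s - a) + 6 * δ * r) a := by fun_prop
    simpa [ContinuousAt] using h
  · filter_upwards [Ioo_mem_nhdsGT hlt] with s hs
    have hs0 : 0 < s := ha.trans_lt hs.1
    have hsub : Icc s b ⊆ Icc a b := Icc_subset_Icc_left hs.1.le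
    rw [← intervalIntegral.integral_add_adjacent_intervals (hw.intervalIntegrable x ha hs0.le)
      (hw.intervalIntegrable x hs0.le (hs0.le.trans hs.2.le))]
    exact (norm_add_le _ _).trans (add_le_add (hw.norm_integral_le x ha hs.1.le)
      (hw.norm_integral_le_of_nonstationary_of_pos hs0 hs.2.le hr hr1
        (fun p hp => hc p (hsub hp)) fun p hp => hx p (hsub hp)))

/- Split `[0, R]` at distance `airyDecay x` from the stationary point `√(|x|/3)`. -/
theorem norm_integral_le_airyDecay (hw : ProfileBound w δ) (x : ℝ) {R : ℝ} (hR : 0 ≤ R) :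
    ‖∫ p in 0..R, airyPhase x p * w p‖ ≤ 14 * δ * airyDecay x := by
  set p₀ := √(|x| / 3) with hp₀
  set r := airyDecay x with hrdef
  have hp₀0 : 0 ≤ p₀ := Real.sqrt_nonneg _
  have hr : 0 < r := airyDecay_pos x
  have hr2 : r ^ 2 * (1 + p₀) = 1 := by
    rw [hrdef, airyDecay_sq, inv_mul_cancel₀ (by positivity)]
  have hx : |x| = 3 * p₀ ^ 2 := by
    rw [hp₀, Real.sq_sqrt (by positivity)]
    ring
  have hnonstat {a b : ℝ} (ha : 0 ≤ a) (hab : a ≤ b) (hd : ∀ p ∈ Icc a b, r ≤ |p - p₀|) :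
      ‖∫ p in a..b, airyPhase x p * w p‖ ≤ 6 * δ * r :=
    hw.norm_integral_le_of_nonstationary ha hab hr (airyDecay_le_one x) hd fun p hp =>
      abs_sub_le_mul_abs_phase_deriv hp₀0 hx hr hr2 (ha.trans hp.1) (hd p hp)
  have hδr : 0 ≤ 6 * δ * r := mul_nonneg (mul_nonneg (by norm_num) hw.nonneg) hr.le
  obtain ⟨t₁, ht₁0, ht₁R, hleft, ht₁⟩ : ∃ t₁, 0 ≤ t₁ ∧ t₁ ≤ R ∧
      ‖∫ p in 0..t₁, airyPhase x p * w p‖ ≤ 6 * δ * r ∧ (t₁ = R ∨ p₀ - r ≤ t₁) := by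
    rcases le_total (p₀ - r) 0 with h | h
    · exact ⟨0, le_rfl, hR, by simpa using hδr, Or.inr h⟩
    refine ⟨min R (p₀ - r), le_min hR h, min_le_left _ _, hnonstat le_rfl (le_min hR h) ?_, ?_⟩
    · intro p hp
      rw [abs_sub_comm]
      exact le_abs.2 (Or.inl (by linarith [hp.2.trans (min_le_right _ _)]))
    · exact (min_choice R (p₀ - r)).imp id Eq.ge
  rcases ht₁ with rfl | ht₁
  · linarith [mul_nonneg hw.nonneg hr.le]
  obtain ⟨t₂, ht₁₂, hlen, hright⟩ : ∃ t₂, t₁ ≤ t₂ ∧ t₂ - t₁ ≤ 2 * r ∧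
      ‖∫ p in t₂..R, airyPhase x p * w p‖ ≤ 6 * δ * r := by
    rcases le_total R (t₁ + 2 * r) with h | h
    · exact ⟨R, ht₁R, by linarith, by simpa using hδr⟩
    · exact ⟨t₁ + 2 * r, by linarith, by linarith, hnonstat (by linarith) h fun p hp =>
        le_abs.2 (Or.inl (by linarith [hp.1]))⟩
  have hmid := hw.norm_integral_le x ht₁0 ht₁₂
  have hint {a b : ℝ} (ha : 0 ≤ a) (hb : 0 ≤ b) := hw.intervalIntegrable x ha hb
  rw [← intervalIntegral.integral_add_adjacent_intervals (hint le_rfl ht₁0) (hint ht₁0 hR),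
    ← intervalIntegral.integral_add_adjacent_intervals (hint ht₁0 (ht₁0.trans ht₁₂))
      (hint (ht₁0.trans ht₁₂) hR)]
  refine ((norm_add_le _ _).trans (add_le_add_right (norm_add_le _ _) _)).trans ?_
  nlinarith [mul_le_mul_of_nonneg_left hlen hw.nonneg]

lemma norm_integral_tail_le (hw : ProfileBound w δ) (ha : 1 ≤ a) (hab : a ≤ b)
    (hx : |x| ≤ a ^ 2) :
    ‖∫ p in a..b, airyPhase x p * w p‖ ≤ 6 * δ * √((2 * a)⁻¹) := by
  have ha0 : 0 < a := one_pos.trans_le ha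
  have hr2 : √((2 * a)⁻¹) ^ 2 = (2 * a)⁻¹ := Real.sq_sqrt (by positivity)
  have hr1 : √((2 * a)⁻¹) ≤ 1 := Real.sqrt_le_one.2 (inv_le_one_of_one_le₀ (by linarith))
  refine hw.norm_integral_le_of_nonstationary (c := 0) ha0.le hab (by positivity) hr1
    (fun p hp => ?_) fun p hp => ?_
  · rw [sub_zero]
    exact hr1.trans (ha.trans (hp.1.trans (le_abs_self p)))
  · have hp0 : 0 < p := ha0.trans_le hp.1
    rw [sub_zero, abs_of_pos hp0, hr2, inv_mul_eq_div, le_div_iff₀ (by positivity)]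
    refine le_trans ?_ (le_abs_self _)
    nlinarith [hp.1, (abs_le.1 hx).1]

end ProfileBound

/-! ### Distributional derivatives -/

section TestFunctions

open scoped ContDiff
open Polynomial (degreeLT)

/-- A test function on the line: smooth with compact support. -/
structure IsTestFunction (ψ : ℝ → ℝ) : Prop where
  contDiff : ContDiff ℝ ∞ ψ
  hasCompactSupport : HasCompactSupport ψ

namespace IsTestFunction

variable {ψ χ f f' : ℝ → ℝ}

protected lemma continuous (hψ : IsTestFunction ψ) : Continuous ψ := hψ.contDiff.continuous

protected lemma integrable (hψ : IsTestFunction ψ) : Integrable ψ :=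
  hψ.continuous.integrable_of_hasCompactSupport hψ.hasCompactSupport

lemma integrable_mul (hψ : IsTestFunction ψ) (hf : Continuous f) :
    Integrable fun x => f x * ψ x :=
  (hf.mul hψ.continuous).integrable_of_hasCompactSupport hψ.hasCompactSupport.mul_left

protected lemma deriv (hψ : IsTestFunction ψ) : IsTestFunction (deriv ψ) :=
  ⟨(contDiff_infty_iff_deriv.1 hψ.contDiff).2, hψ.hasCompactSupport.deriv⟩

protected lemma iteratedDeriv (hψ : IsTestFunction ψ) (k : ℕ) :
    IsTestFunction (iteratedDeriv k ψ) := by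
  induction k with
  | zero => rwa [iteratedDeriv_zero]
  | succ k ih =>
    rw [iteratedDeriv_succ]
    exact ih.deriv

lemma sub_const_mul (hψ : IsTestFunction ψ) (hχ : IsTestFunction χ) (c : ℝ) :
    IsTestFunction fun x => ψ x - c * χ x :=
  ⟨hψ.contDiff.sub (contDiff_const.mul hχ.contDiff),
    hψ.hasCompactSupport.sub hχ.hasCompactSupport.mul_left⟩

protected lemma differentiable (hψ : IsTestFunction ψ) : Differentiable ℝ ψ :=
  hψ.contDiff.differentiable (by simp)

lemma hasDerivAt (hψ : IsTestFunction ψ) (x : ℝ) : HasDerivAt ψ (deriv ψ x) x :=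
  (hψ.differentiable x).hasDerivAt

lemma integral_mul_deriv (hψ : IsTestFunction ψ) (hf : ∀ x, HasDerivAt f (f' x) x)
    (hf' : Continuous f') : ∫ x, f x * deriv ψ x = -∫ x, f' x * ψ x := by
  have hfc : Continuous f := continuous_iff_continuousAt.2 fun x => (hf x).continuousAt
  exact integral_mul_deriv_eq_deriv_mul_of_integrable (fun x _ => hf x)
    (fun x _ => hψ.hasDerivAt x) (hψ.deriv.integrable_mul hfc) (hψ.integrable_mul hf')
    (hψ.integrable_mul hfc)

lemma exists_deriv_eq (hψ : IsTestFunction ψ) (h0 : ∫ x, ψ x = 0) :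
    ∃ P, IsTestFunction P ∧ deriv P = ψ := by
  obtain ⟨M, hM⟩ := hψ.hasCompactSupport.isCompact.isBounded.subset_ball 0
  have hzero (x : ℝ) (hx : M ≤ |x|) : ψ x = 0 := by
    by_contra h
    exact (mem_ball_zero_iff.1 (hM (subset_tsupport _ h))).not_ge hx
  have hderiv (x : ℝ) : HasDerivAt (fun x => ∫ y in -M..x, ψ y) (ψ x) x :=
    hψ.continuous.integral_hasStrictDerivAt _ x |>.hasDerivAt
  have heq : deriv (fun x => ∫ y in -M..x, ψ y) = ψ := funext fun x => (hderiv x).deriv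
  refine ⟨fun x => ∫ y in -M..x, ψ y, ⟨?_, ?_⟩, heq⟩
  · rw [contDiff_infty_iff_deriv, heq]
    exact ⟨fun x => (hderiv x).differentiableAt, hψ.contDiff⟩
  refine HasCompactSupport.intro (isCompact_Icc (a := -M) (b := M)) fun x hx => ?_
  rcases lt_or_ge x (-M) with hleft | hleft
  · refine intervalIntegral.integral_zero_ae (ae_of_all _ fun y hy => hzero y ?_)
    rw [uIoc_of_ge hleft.le] at hy
    exact (le_neg.2 hy.2).trans (neg_le_abs y)
  · have hright : M < x := not_le.1 fun h => hx ⟨hleft, h⟩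
    rw [intervalIntegral.integral_of_le hleft, setIntegral_eq_integral_of_forall_compl_eq_zero, h0]
    intro y hy
    refine hzero y ?_
    by_contra! h
    exact hy ⟨(abs_lt.1 h).1, (abs_lt.1 h).2.le.trans hright.le⟩

lemma integral_pow_mul_iteratedDeriv (hψ : IsTestFunction ψ) (k : ℕ) :
    ∫ x, x ^ k * iteratedDeriv k ψ x = (-1 : ℝ) ^ k * k.factorial * ∫ x, ψ x := by
  induction k with
  | zero => simp
  | succ k ih =>
    have hparts := (hψ.iteratedDeriv k).integral_mul_deriv (f := fun x => x ^ (k + 1))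
      (f' := fun x => ((k + 1 : ℕ) : ℝ) * x ^ k) (hasDerivAt_pow (k + 1)) (by fun_prop)
    simp only [mul_assoc, integral_const_mul] at hparts
    rw [iteratedDeriv_succ, hparts, ih, Nat.factorial_succ]
    push_cast
    ring

end IsTestFunction

lemma exists_isTestFunction_integral_eq_one : ∃ ρ, IsTestFunction ρ ∧ ∫ x, ρ x = 1 :=
  let b : ContDiffBump (0 : ℝ) := ⟨1, 2, one_pos, one_lt_two⟩
  ⟨b.normed volume, ⟨b.contDiff_normed, b.hasCompactSupport_normed⟩, b.integral_normed⟩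

lemma iteratedDeriv_sub_const_mul {ψ χ : ℝ → ℝ} (hψ : IsTestFunction ψ) (hχ : IsTestFunction χ)
    (c x : ℝ) (k : ℕ) : iteratedDeriv k (fun x => ψ x - c * χ x) x
      = iteratedDeriv k ψ x - c * iteratedDeriv k χ x := by
  rw [iteratedDeriv_fun_sub (hψ.contDiff.contDiffAt.of_le (mod_cast le_top))
    ((contDiff_const.mul hχ.contDiff).contDiffAt.of_le (mod_cast le_top)),
    iteratedDeriv_const_mul_field]

/- Every test function differs from a multiple of a fixed one by a derivative. -/
lemma exists_integral_mul_iteratedDeriv_eq {h : ℝ → ℝ} {k : ℕ} (hh : Continuous h)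
    (hk : ∀ ψ, IsTestFunction ψ → ∫ x, h x * iteratedDeriv (k + 1) ψ x = 0) :
    ∃ c, ∀ ψ, IsTestFunction ψ → ∫ x, h x * iteratedDeriv k ψ x = c * ∫ x, ψ x := by
  obtain ⟨ρ, hρ, hρ1⟩ := exists_isTestFunction_integral_eq_one
  refine ⟨∫ x, h x * iteratedDeriv k ρ x, fun ψ hψ => ?_⟩
  obtain ⟨P, hP, hPψ⟩ := (hψ.sub_const_mul hρ (∫ x, ψ x)).exists_deriv_eq (by
    rw [integral_sub hψ.integrable (hρ.integrable.const_mul _), integral_const_mul, hρ1, mul_one,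
      sub_self])
  have h0 := hk P hP
  simp only [iteratedDeriv_succ', hPψ, iteratedDeriv_sub_const_mul hψ hρ, mul_sub,
    mul_left_comm (h _)] at h0
  rw [integral_sub ((hψ.iteratedDeriv k).integrable_mul hh)
    (((hρ.iteratedDeriv k).integrable_mul hh).const_mul _), integral_const_mul] at h0
  linarith

theorem exists_polynomial_of_integral_mul_iteratedDeriv_eq_zero (k : ℕ) {h : ℝ → ℝ}
    (hh : Continuous h) (hk : ∀ ψ, IsTestFunction ψ → ∫ x, h x * iteratedDeriv k ψ x = 0) :
    ∃ P ∈ degreeLT ℝ k, ∀ x, h x = P.eval x := by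
  induction k generalizing h with
  | zero =>
    have hae : h =ᵐ[volume] 0 :=
      ae_eq_zero_of_integral_contDiff_smul_eq_zero hh.locallyIntegrable fun g hg hgc => by
        simpa only [iteratedDeriv_zero, smul_eq_mul, mul_comm] using hk g ⟨hg, hgc⟩
    have h0 := (Continuous.ae_eq_iff_eq volume hh continuous_zero).1 hae
    exact ⟨0, zero_mem _, fun x => by simp only [h0, Pi.zero_apply, Polynomial.eval_zero]⟩
  | succ k ih =>
    obtain ⟨c, hc⟩ := exists_integral_mul_iteratedDeriv_eq hh hk
    set a : ℝ := c * ((-1 : ℝ) ^ k * k.factorial)⁻¹ with ha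
    obtain ⟨P, hP, hPh⟩ := ih (h := fun x => h x - a * x ^ k) (by fun_prop) fun ψ hψ => by
      have hψk := hψ.iteratedDeriv k
      simp only [sub_mul, mul_assoc]
      rw [integral_sub (hψk.integrable_mul hh)
        ((hψk.integrable_mul (continuous_pow k)).const_mul a), integral_const_mul,
        hψ.integral_pow_mul_iteratedDeriv, hc ψ hψ, ha, ← mul_assoc,
        inv_mul_cancel_right₀ (by positivity), sub_self]
    refine ⟨P + Polynomial.monomial k a, add_mem ?_ ?_, fun x => ?_⟩
    · exact Polynomial.degreeLT_mono k.le_succ hP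
    · exact Polynomial.mem_degreeLT.2 ((Polynomial.degree_monomial_le k a).trans_lt
        (mod_cast k.lt_succ_self))
    · rw [Polynomial.eval_add, Polynomial.eval_monomial, ← hPh]
      ring

theorem exists_hasDerivAt_of_integral_eq_zero {f n : ℝ → ℝ} (hf : Continuous f) (hn : Continuous n)
    (hfn : ∀ ψ, IsTestFunction ψ →
      ∫ x, (f x * deriv (deriv (deriv ψ)) x - n x * deriv ψ x) = 0) :
    ∃ (f₁ : ℝ → ℝ) (β : ℝ), (∀ x, HasDerivAt f (f₁ x) x) ∧ ∀ x, HasDerivAt f₁ (n x + β) x := by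
  have hprim {g : ℝ → ℝ} (hg : Continuous g) (x : ℝ) :
      HasDerivAt (fun x => ∫ y in 0..x, g y) (g x) x :=
    (hg.integral_hasStrictDerivAt 0 x).hasDerivAt
  set N₁ : ℝ → ℝ := fun x => ∫ y in 0..x, n y
  have hN₁ : Continuous N₁ := continuous_iff_continuousAt.2 fun x => (hprim hn x).continuousAt
  set N : ℝ → ℝ := fun x => ∫ y in 0..x, N₁ y
  have hN : Continuous N := continuous_iff_continuousAt.2 fun x => (hprim hN₁ x).continuousAt
  obtain ⟨P, hP, hPf⟩ := exists_polynomial_of_integral_mul_iteratedDeriv_eq_zero 3 (hf.sub hN)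
    fun ψ hψ => by
      have hzero := hfn ψ hψ
      have hψ₃ := hψ.deriv.deriv.deriv
      rw [integral_sub (hψ₃.integrable_mul hf) (hψ.deriv.integrable_mul hn)] at hzero
      simp only [iteratedDeriv_succ, iteratedDeriv_zero, sub_mul, Pi.sub_apply]
      rw [integral_sub (hψ₃.integrable_mul hf) (hψ₃.integrable_mul hN),
        hψ.deriv.deriv.integral_mul_deriv (hprim hN₁) hN₁,
        hψ.deriv.integral_mul_deriv (hprim hn) hn, neg_neg, hzero]
  obtain rfl : f = fun x => N x + P.eval x := funext fun x => by
    rw [← hPf x, Pi.sub_apply, add_sub_cancel]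
  have hconst := Polynomial.eq_C_of_derivative_eq_zero (p := P.derivative.derivative)
    (Polynomial.iterate_derivative_eq_zero_of_degree_lt (Polynomial.mem_degreeLT.1 hP))
  refine ⟨fun x => N₁ x + P.derivative.eval x, P.derivative.derivative.coeff 0,
    fun x => (hprim hN₁ x).add (P.hasDerivAt x), fun x => ?_⟩
  refine (hprim hn x).add ((P.derivative.hasDerivAt x).congr_deriv ?_)
  rw [hconst, Polynomial.eval_C, Polynomial.coeff_C_zero]

end TestFunctions

/-! ### Plancherel's identity -/

section Plancherel

open scoped FourierTransform SchwartzMap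

section InnerProductSpace

variable {V F : Type*} [NormedAddCommGroup V] [InnerProductSpace ℝ V] [FiniteDimensional ℝ V]
  [MeasurableSpace V] [BorelSpace V] [NormedAddCommGroup F] [InnerProductSpace ℂ F] {f : V → F}

lemma continuous_fourier_of_integrable (hf : Integrable f) : Continuous (𝓕 f) :=
  VectorFourier.fourierIntegral_continuous Real.continuous_fourierChar
    (by exact continuous_inner) hf

variable [CompleteSpace F]

/- Both sides define the same tempered distribution. -/
lemma coeFn_fourier_toLp_ae_eq (hf : Integrable f) (hf₂ : MemLp f 2) :
    (𝓕 (hf₂.toLp f) : Lp F 2 (volume : Measure V)) =ᵐ[volume] 𝓕 f := by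
  refine ae_eq_of_integral_contDiff_smul_eq
    ((Lp.memLp (𝓕 (hf₂.toLp f))).locallyIntegrable one_le_two)
    (continuous_fourier_of_integrable hf).locallyIntegrable fun g hg hgc => ?_
  let φ : 𝓢(V, ℂ) := (hgc.comp_left Complex.ofReal_zero).toSchwartzMap
    (Complex.ofRealCLM.contDiff.comp hg)
  have hφ (x : V) (y : F) : φ x • y = g x • y := RCLike.real_smul_eq_coe_smul (K := ℂ) _ _ |>.symm
  have hpair := congrArg (fun T => T φ) (Lp.fourier_toTemperedDistribution_eq (hf₂.toLp f))
  simp only [TemperedDistribution.fourier_apply, Lp.toTemperedDistribution_apply, hφ] at hpair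
  have hcoe : ∫ x, (𝓕 φ) x • (hf₂.toLp f) x = ∫ x, 𝓕 (φ : V → ℂ) x • f x := by
    refine integral_congr_ae ?_
    filter_upwards [hf₂.coeFn_toLp] with x hx
    rw [hx, SchwartzMap.fourier_coe]
  have hflip := VectorFourier.integral_fourierIntegral_smul_eq_flip (L := innerₗ V)
    (μ := (volume : Measure V)) (ν := (volume : Measure V))
    Real.continuous_fourierChar (by exact continuous_inner) (φ.integrable (μ := volume)) hf
  rw [flip_innerₗ] at hflip
  exact hpair.symm.trans (hcoe.trans (hflip.trans (integral_congr_ae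
    (ae_of_all _ fun x => hφ x _))))

theorem eLpNorm_fourier_eq (hf : Integrable f) (hf₂ : MemLp f 2) :
    eLpNorm (𝓕 f) 2 volume = eLpNorm f 2 volume := by
  rw [← eLpNorm_congr_ae (coeFn_fourier_toLp_ae_eq hf hf₂)]
  have h := Lp.norm_fourier_eq (hf₂.toLp f)
  rw [Lp.norm_def, Lp.norm_def, ENNReal.toReal_eq_toReal_iff' (Lp.eLpNorm_ne_top _)
    (Lp.eLpNorm_ne_top _)] at h
  rw [h, eLpNorm_congr_ae hf₂.coeFn_toLp]

lemma memLp_fourier (hf : Integrable f) (hf₂ : MemLp f 2) : MemLp (𝓕 f) 2 :=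
  ⟨(continuous_fourier_of_integrable hf).aestronglyMeasurable,
    (eLpNorm_fourier_eq hf hf₂).trans_lt hf₂.2⟩

theorem integral_norm_sq_fourier_eq (hf : Integrable f) (hf₂ : MemLp f 2) :
    ∫ ξ, ‖𝓕 f ξ‖ ^ 2 = ∫ x, ‖f x‖ ^ 2 := by
  have h := eLpNorm_fourier_eq hf hf₂
  rw [(memLp_fourier hf hf₂).eLpNorm_eq_integral_rpow_norm two_ne_zero ENNReal.ofNat_ne_top,
    hf₂.eLpNorm_eq_integral_rpow_norm two_ne_zero ENNReal.ofNat_ne_top,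
    ENNReal.ofReal_eq_ofReal_iff (by positivity) (by positivity)] at h
  simp only [ENNReal.toReal_ofNat, Real.rpow_ofNat] at h
  exact (Real.rpow_left_inj (by positivity) (by positivity) (by norm_num)).1 h

end InnerProductSpace

variable {f : ℝ → ℂ} {a b : ℝ}

lemma integral_cexp_I_mul_eq_fourier (f : ℝ → ℂ) (x : ℝ) :
    ∫ p : ℝ, Complex.exp (Complex.I * ((p * x : ℝ) : ℂ)) * f p
      = 𝓕 f (-(2 * Real.pi)⁻¹ * x) := by
  rw [Real.fourier_real_eq_integral_exp_smul]
  refine integral_congr_ae (ae_of_all _ fun p => ?_)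
  have hphase : -2 * Real.pi * p * (-(2 * Real.pi)⁻¹ * x) = p * x := by
    field_simp [Real.pi_pos.ne']
  simp only [smul_eq_mul, hphase, mul_comm Complex.I]

lemma integrable_norm_sq_integral_cexp (hf : Integrable f) (hf₂ : MemLp f 2) :
    Integrable fun x : ℝ => ‖∫ p : ℝ, Complex.exp (Complex.I * ((p * x : ℝ) : ℂ)) * f p‖ ^ 2 := by
  simp only [integral_cexp_I_mul_eq_fourier]
  exact ((memLp_fourier hf hf₂).integrable_norm_pow two_ne_zero).comp_mul_left'
    (neg_ne_zero.2 (by positivity))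

lemma integral_norm_sq_integral_cexp (hf : Integrable f) (hf₂ : MemLp f 2) :
    ∫ x : ℝ, ‖∫ p : ℝ, Complex.exp (Complex.I * ((p * x : ℝ) : ℂ)) * f p‖ ^ 2
      = 2 * Real.pi * ∫ p, ‖f p‖ ^ 2 := by
  simp only [integral_cexp_I_mul_eq_fourier]
  rw [Measure.integral_comp_mul_left (fun ξ => ‖𝓕 f ξ‖ ^ 2), integral_norm_sq_fourier_eq hf hf₂,
    smul_eq_mul, inv_neg, inv_inv, abs_neg, abs_of_pos (by positivity)]

theorem integral_norm_sq_intervalIntegral_cexp (hab : a ≤ b) (hf : ContinuousOn f (Icc a b)) :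
    Integrable (fun x : ℝ =>
      ‖∫ p in a..b, Complex.exp (Complex.I * ((p * x : ℝ) : ℂ)) * f p‖ ^ 2) ∧
    ∫ x : ℝ, ‖∫ p in a..b, Complex.exp (Complex.I * ((p * x : ℝ) : ℂ)) * f p‖ ^ 2
      = 2 * Real.pi * ∫ p in a..b, ‖f p‖ ^ 2 := by
  have hIoc {g : ℝ → ℂ} (hg : ContinuousOn g (Icc a b)) : IntegrableOn g (Ioc a b) :=
    hg.integrableOn_Icc.mono_set Ioc_subset_Icc_self
  have hind : Integrable ((Ioc a b).indicator f) :=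
    (integrable_indicator_iff measurableSet_Ioc).2 (hIoc hf)
  have hsq : (fun p => ‖(Ioc a b).indicator f p‖ ^ 2) = (Ioc a b).indicator fun p => ‖f p‖ ^ 2 :=
    indicator_comp_of_zero (g := fun y : ℂ => ‖y‖ ^ 2) (by simp) |>.symm
  have hind₂ : MemLp ((Ioc a b).indicator f) 2 := by
    rw [memLp_two_iff_integrable_sq_norm hind.aestronglyMeasurable, hsq,
      integrable_indicator_iff measurableSet_Ioc]
    exact (hf.norm.pow 2).integrableOn_Icc.mono_set Ioc_subset_Icc_self
  have hint (x : ℝ) : ∫ p in a..b, Complex.exp (Complex.I * ((p * x : ℝ) : ℂ)) * f p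
      = ∫ p, Complex.exp (Complex.I * ((p * x : ℝ) : ℂ)) * (Ioc a b).indicator f p := by
    simp only [intervalIntegral.integral_of_le hab, ← integral_indicator measurableSet_Ioc,
      indicator_mul_right]
  simp only [hint]
  refine ⟨integrable_norm_sq_integral_cexp hind hind₂, ?_⟩
  rw [integral_norm_sq_integral_cexp hind hind₂, hsq, integral_indicator measurableSet_Ioc,
    intervalIntegral.integral_of_le hab]

end Plancherel

/-! ### Hardy's inequality -/

theorem integral_norm_sq_div_sq_le {E : Type*} [NormedAddCommGroup E] [InnerProductSpace ℝ E]
    {z z' : ℝ → E} {a b : ℝ} (ha : 0 < a) (hab : a ≤ b)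
    (hz : ∀ p ∈ Icc a b, HasDerivAt z (z' p) p)
    (hz' : IntervalIntegrable (fun p => ‖z' p‖ ^ 2) volume a b) :
    ∫ p in a..b, ‖z p‖ ^ 2 / p ^ 2 ≤ 2 * (‖z a‖ ^ 2 / a) + 4 * ∫ p in a..b, ‖z' p‖ ^ 2 := by
  have hpos (p) (hp : p ∈ Icc a b) : 0 < p := ha.trans_le hp.1
  have hzc : ContinuousOn z (Icc a b) := fun p hp => (hz p hp).continuousAt.continuousWithinAt
  have hsq : IntervalIntegrable (fun p => ‖z p‖ ^ 2 / p ^ 2) volume a b := by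
    refine ContinuousOn.intervalIntegrable ?_
    rw [uIcc_of_le hab]
    exact ContinuousOn.div (by fun_prop) (by fun_prop) fun p hp => pow_ne_zero 2 (hpos p hp).ne'
  have hderiv (p) (hp : p ∈ Icc a b) : HasDerivAt (fun p => -(‖z p‖ ^ 2 / p))
      (‖z p‖ ^ 2 / p ^ 2 - 2 * (inner ℝ (z p) (z' p) / p)) p := by
    have hp0 := (hpos p hp).ne'
    refine (((hz p hp).norm_sq.div (hasDerivAt_id p) hp0).neg).congr_deriv ?_
    simp only [id]
    field_simp
    ring
  have hbound (p) (hp : p ∈ Icc a b) : 1 / 2 * (‖z p‖ ^ 2 / p ^ 2) - 2 * ‖z' p‖ ^ 2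
      ≤ ‖z p‖ ^ 2 / p ^ 2 - 2 * (inner ℝ (z p) (z' p) / p) := by
    have hp0 := hpos p hp
    have hinner : inner ℝ (z p) (z' p) / p ≤ ‖z p‖ / p * ‖z' p‖ := by
      rw [div_mul_eq_mul_div]
      exact div_le_div_of_nonneg_right (real_inner_le_norm _ _) hp0.le
    rw [← div_pow]
    nlinarith [sq_nonneg (‖z p‖ / p - 2 * ‖z' p‖)]
  have hle := intervalIntegral.integral_le_sub_of_hasDeriv_right_of_le hab
    (φ := fun p => 1 / 2 * (‖z p‖ ^ 2 / p ^ 2) - 2 * ‖z' p‖ ^ 2)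
    (fun p hp => (hderiv p hp).continuousAt.continuousWithinAt)
    (fun p hp => (hderiv p (Ioo_subset_Icc_self hp)).hasDerivWithinAt)
    ((integrableOn_Icc_iff_integrableOn_Ioc).2
      ((intervalIntegrable_iff_integrableOn_Ioc_of_le hab).1
        ((hsq.const_mul _).sub (hz'.const_mul _))))
    fun p hp => hbound p (Ioo_subset_Icc_self hp)
  rw [intervalIntegral.integral_sub (hsq.const_mul _) (hz'.const_mul _),
    intervalIntegral.integral_const_mul, intervalIntegral.integral_const_mul] at hle
  have hend : 0 ≤ ‖z b‖ ^ 2 / b := div_nonneg (sq_nonneg _) (ha.le.trans hab)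
  linarith

/-! ### Square integrable primitives -/

lemma sq_le_of_hasDerivAt_of_integral_sq_le {G D : ℝ → ℝ} {C K : ℝ}
    (hG : ∀ x, HasDerivAt G (D x) x) (hD : ∀ x, |D x| ≤ K) (hGi : Integrable fun x => G x ^ 2)
    (hGC : ∫ x, G x ^ 2 ≤ C) : G 0 ^ 2 ≤ 2 * C + 2 * K ^ 2 := by
  have hK : 0 ≤ K := (abs_nonneg _).trans (hD 0)
  have hpt (x) (hx : x ∈ Ioc (0 : ℝ) 1) : G 0 ^ 2 ≤ 2 * G x ^ 2 + 2 * K ^ 2 := by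
    have hlip : ‖G 0 - G x‖ ≤ K * ‖0 - x‖ :=
      convex_univ.norm_image_sub_le_of_norm_hasDerivWithin_le
        (fun y _ => (hG y).hasDerivWithinAt) (fun y _ => hD y) (mem_univ x) (mem_univ 0)
    have hK' : |G 0 - G x| ≤ K := hlip.trans (mul_le_of_le_one_right hK (by
      rw [zero_sub, norm_neg, Real.norm_of_nonneg hx.1.le]
      exact hx.2))
    nlinarith [sq_le_sq' (abs_le.1 hK').1 (abs_le.1 hK').2, sq_nonneg (G 0 - 2 * G x)]
  have hmono := setIntegral_mono_on (μ := volume) (f := fun _ => G 0 ^ 2)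
    (g := fun x => 2 * G x ^ 2 + 2 * K ^ 2) (s := Ioc 0 1) (by simp)
    ((hGi.const_mul 2).integrableOn.add (integrableOn_const (by simp))) measurableSet_Ioc hpt
  rw [integral_add (hGi.const_mul 2).integrableOn (integrableOn_const (by simp)),
    integral_const_mul, setIntegral_const, setIntegral_const,
    Real.volume_real_Ioc_of_le zero_le_one, sub_zero, one_smul, one_smul] at hmono
  have hset : ∫ x in Ioc (0 : ℝ) 1, G x ^ 2 ≤ C :=
    (setIntegral_le_integral hGi (ae_of_all _ fun x => sq_nonneg _)).trans hGC
  linarith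

lemma integrable_sq_of_tendsto {α : Type*} [MeasurableSpace α] {μ : Measure α}
    {Gn : ℕ → α → ℝ} {G : α → ℝ} {C : ℝ} (hm : ∀ n, AEStronglyMeasurable (Gn n) μ)
    (hGi : ∀ n, Integrable (fun x => Gn n x ^ 2) μ) (hGC : ∀ n, ∫ x, Gn n x ^ 2 ∂μ ≤ C)
    (hlim : ∀ᵐ x ∂μ, Tendsto (fun n => Gn n x) atTop (𝓝 (G x))) :
    Integrable (fun x => G x ^ 2) μ := by
  have hMem (n : ℕ) : MemLp (Gn n) 2 μ := (memLp_two_iff_integrable_sq (hm n)).2 (hGi n)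
  have hle (n : ℕ) : eLpNorm (Gn n) 2 μ ≤ ENNReal.ofReal (C ^ (2⁻¹ : ℝ)) := by
    rw [(hMem n).eLpNorm_eq_integral_rpow_norm two_ne_zero ENNReal.ofNat_ne_top]
    simp only [ENNReal.toReal_ofNat, Real.rpow_ofNat, Real.norm_eq_abs, sq_abs]
    exact ENNReal.ofReal_le_ofReal (Real.rpow_le_rpow (integral_nonneg fun x => sq_nonneg _)
      (hGC n) (by norm_num))
  have hG := aestronglyMeasurable_of_tendsto_ae atTop hm hlim
  refine (memLp_two_iff_integrable_sq hG).1 ⟨hG, ?_⟩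
  calc eLpNorm G 2 μ ≤ liminf (fun n => eLpNorm (Gn n) 2 μ) atTop :=
        Lp.eLpNorm_lim_le_liminf_eLpNorm hm G hlim
    _ ≤ liminf (fun _ => ENNReal.ofReal (C ^ (2⁻¹ : ℝ))) (atTop : Filter ℕ) :=
        liminf_le_liminf (Eventually.of_forall hle)
    _ < ⊤ := by
        rw [liminf_const]
        exact ENNReal.ofReal_lt_top

theorem exists_sq_integrable_primitive {Gn Dn : ℕ → ℝ → ℝ} {D : ℝ → ℝ} {C K : ℝ}
    (hG : ∀ n x, HasDerivAt (Gn n) (Dn n x) x) (hDc : ∀ n, Continuous (Dn n))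
    (hDb : ∀ n x, |Dn n x| ≤ K) (hGi : ∀ n, Integrable fun x => Gn n x ^ 2)
    (hGC : ∀ n, ∫ x, Gn n x ^ 2 ≤ C) (hlim : ∀ x, Tendsto (fun n => Dn n x) atTop (𝓝 (D x)))
    (hD : Continuous D) :
    ∃ G : ℝ → ℝ, (∀ x, HasDerivAt G (D x) x) ∧ Integrable fun x => G x ^ 2 := by
  obtain ⟨a, -, φ, hφ, ha⟩ := tendsto_subseq_of_bounded (x := fun n => Gn n 0)
    (s := Metric.closedBall 0 (√(2 * C + 2 * K ^ 2))) Metric.isBounded_closedBall fun n => by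
      rw [mem_closedBall_zero_iff, Real.norm_eq_abs]
      exact Real.abs_le_sqrt (sq_le_of_hasDerivAt_of_integral_sq_le (hG n) (hDb n) (hGi n) (hGC n))
  refine ⟨fun x => a + ∫ y in 0..x, D y,
    fun x => (hD.integral_hasStrictDerivAt 0 x).hasDerivAt.const_add a,
    integrable_sq_of_tendsto (Gn := fun n => Gn (φ n)) (fun n => ?_) (fun n => hGi (φ n))
      (fun n => hGC (φ n)) (ae_of_all _ fun x => ?_)⟩
  · exact (continuous_iff_continuousAt.2 fun x => (hG _ x).continuousAt).aestronglyMeasurable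
  · have hFTC (n : ℕ) : Gn n x = Gn n 0 + ∫ y in 0..x, Dn n y := by
      rw [intervalIntegral.integral_eq_sub_of_hasDerivAt (fun y _ => hG n y)
        ((hDc n).intervalIntegrable _ _), add_sub_cancel]
    simp only [hFTC]
    exact ha.add (intervalIntegral.tendsto_integral_filter_of_dominated_convergence (fun _ => K)
      (Eventually.of_forall fun n => (hDc _).aestronglyMeasurable)
      (Eventually.of_forall fun n => ae_of_all _ fun y _ => hDb _ y) (by simp)
      (ae_of_all _ fun y _ => (hlim y).comp hφ.tendsto_atTop))

/-! ### Functions with small profile -/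

section Physical

variable {w : ℝ → ℂ} {V : ℝ → ℝ} {δ a b x R : ℝ}

lemma MemE.profileBound (hm : MemE w) (h : EnormP 1 w ≤ δ) : ProfileBound w δ := by
  rw [EnormP, Real.one_rpow, one_mul] at h
  have hsup : 0 ≤ supN w := Real.iSup_nonneg fun _ => norm_nonneg _
  have hdL2 : 0 ≤ dL2 w := ENNReal.toReal_nonneg
  have hsq : ∫ p in Ioi 0, ‖deriv w p‖ ^ 2 = dL2 w ^ 2 := by
    rw [dL2, hm.derivL2.eLpNorm_eq_integral_rpow_norm two_ne_zero ENNReal.ofNat_ne_top,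
      ENNReal.toReal_ofReal (by positivity), ← Real.rpow_mul_natCast (by positivity)]
    norm_num
  exact
    { diff := hm.diff
      bound := fun p _ => (le_ciSup hm.bdd p).trans (by rw [supN] at *; linarith)
      integrable := hm.derivL2.integrable_norm_pow two_ne_zero
      integral_le := hsq.trans_le (pow_le_pow_left₀ hdL2 (by linarith) 2) }

lemma abs_one_div_pi_mul_re_le (c : ℂ) : |1 / Real.pi * c.re| ≤ ‖c‖ / 3 := by
  rw [abs_mul, abs_of_pos (by positivity), one_div, inv_mul_eq_div]
  exact div_le_div₀ (norm_nonneg c) (Complex.abs_re_le_norm c) three_pos Real.pi_gt_three.le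

lemma physPartial_one_eq (w : ℝ → ℂ) (x : ℝ) (hR : 0 ≤ R) :
    physPartial w 1 x R = 1 / Real.pi * (∫ p in 0..R, airyPhase x p * w p).re := by
  simp only [physPartial, airyPhase, mul_one, intervalIntegral.integral_of_le hR]

namespace ProfileBound

lemma physPartial_sub (hw : ProfileBound w δ) (x : ℝ) (ha : 0 ≤ a) (hb : 0 ≤ b) :
    physPartial w 1 x b - physPartial w 1 x a
      = 1 / Real.pi * (∫ p in a..b, airyPhase x p * w p).re := by
  rw [physPartial_one_eq w x hb, physPartial_one_eq w x ha, ← mul_sub, ← Complex.sub_re,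
    intervalIntegral.integral_interval_sub_left (hw.intervalIntegrable x le_rfl hb)
      (hw.intervalIntegrable x le_rfl ha)]

lemma abs_physPartial_le (hw : ProfileBound w δ) (x : ℝ) (hR : 0 ≤ R) :
    |physPartial w 1 x R| ≤ 5 * δ * airyDecay x := by
  rw [physPartial_one_eq w x hR]
  refine (abs_one_div_pi_mul_re_le _).trans ?_
  linarith [hw.norm_integral_le_airyDecay x hR, mul_nonneg hw.nonneg (airyDecay_pos x).le]

lemma abs_physPartial_le_mul (hw : ProfileBound w δ) (x : ℝ) (hR : 0 ≤ R) :
    |physPartial w 1 x R| ≤ δ * R := by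
  rw [physPartial_one_eq w x hR]
  refine (abs_one_div_pi_mul_re_le _).trans ?_
  linarith [hw.norm_integral_le x le_rfl hR, mul_nonneg hw.nonneg hR]

lemma continuous_physPartial (hw : ProfileBound w δ) (hR : 0 ≤ R) :
    Continuous fun x => physPartial w 1 x R := by
  simp only [physPartial_one_eq w _ hR]
  refine continuous_const.mul (Complex.continuous_re.comp ?_)
  refine intervalIntegral.continuous_of_dominated_interval (bound := fun _ => δ)
    (fun x => ?_) (fun x => ae_of_all _ fun p hp => ?_) (by simp)
    (ae_of_all _ fun p _ => by unfold airyPhase; fun_prop)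
  · exact (intervalIntegrable_iff.1 (hw.intervalIntegrable x le_rfl hR)).aestronglyMeasurable
  · rw [uIoc_of_le hR] at hp
    rw [norm_mul, norm_airyPhase, one_mul]
    exact hw.bound p hp.1

end ProfileBound

namespace IsPhys

protected lemma abs_le (hV : IsPhys w 1 V) (hw : ProfileBound w δ) (x : ℝ) :
    |V x| ≤ 5 * δ * airyDecay x :=
  le_of_tendsto (hV x).abs ((eventually_ge_atTop 0).mono fun _ hR => hw.abs_physPartial_le x hR)

lemma abs_sub_physPartial_le (hV : IsPhys w 1 V) (hw : ProfileBound w δ) (hR : 1 ≤ R)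
    (hx : |x| ≤ R ^ 2) : |V x - physPartial w 1 x R| ≤ 2 * δ * √((2 * R)⁻¹) := by
  have hR0 : 0 ≤ R := zero_le_one.trans hR
  refine le_of_tendsto ((hV x).sub_const (physPartial w 1 x R)).abs
    ((eventually_ge_atTop R).mono fun R' hR' => ?_)
  rw [hw.physPartial_sub x hR0 (hR0.trans hR')]
  exact (abs_one_div_pi_mul_re_le _).trans (by linarith [hw.norm_integral_tail_le hR hR' hx])

protected lemma continuous (hV : IsPhys w 1 V) (hw : ProfileBound w δ) : Continuous V := by
  have hlim : Tendsto (fun R : ℝ => 2 * δ * √((2 * R)⁻¹)) atTop (𝓝 0) := by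
    have hinv : Tendsto (fun R : ℝ => (2 * R)⁻¹) atTop (𝓝 0) :=
      tendsto_inv_atTop_zero.comp (tendsto_id.const_mul_atTop two_pos)
    simpa using hinv.sqrt.const_mul (2 * δ)
  have hunif : TendstoLocallyUniformly (fun R x => physPartial w 1 x R) V atTop := by
    rw [tendstoLocallyUniformly_iff_forall_isCompact]
    intro K hK
    obtain ⟨X, hX⟩ := hK.isBounded.exists_norm_le
    rw [Metric.tendstoUniformlyOn_iff]
    intro η hη
    filter_upwards [hlim.eventually_lt_const hη, eventually_ge_atTop 1, eventually_ge_atTop X]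
      with R hlt hR hRX x hx
    rw [Real.dist_eq]
    exact (hV.abs_sub_physPartial_le hw hR ((hX x hx).trans (by nlinarith))).trans_lt hlt
  exact hunif.continuous
    ((eventually_ge_atTop 0).mono fun R hR => hw.continuous_physPartial hR).frequently

end IsPhys

/-! ### The primitive of a function whose profile vanishes at zero frequency -/

/-- The primitive in `x` of `physPartial w 1 x b - physPartial w 1 x a`, obtained by dividing the
profile by `i p`. -/
def truncatedPrimitive (w : ℝ → ℂ) (a b x : ℝ) : ℝ :=
  1 / Real.pi * (∫ p in a..b, airyPhase x p * (w p / (Complex.I * p))).re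

namespace ProfileBound

lemma intervalIntegrable_norm_deriv_sq (hw : ProfileBound w δ) (ha : 0 ≤ a) (hab : a ≤ b) :
    IntervalIntegrable (fun p => ‖deriv w p‖ ^ 2) volume a b := by
  rw [intervalIntegrable_iff_integrableOn_Ioc_of_le hab]
  exact hw.integrable.mono_set fun p hp => ha.trans_lt hp.1

lemma integral_norm_deriv_sq_le (hw : ProfileBound w δ) (ha : 0 ≤ a) (hab : a ≤ b) :
    ∫ p in a..b, ‖deriv w p‖ ^ 2 ≤ δ ^ 2 := by
  rw [intervalIntegral.integral_of_le hab]
  exact (setIntegral_mono_set hw.integrable (ae_of_all _ fun p => by positivity)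
    (Eventually.of_forall fun p hp => ha.trans_lt hp.1)).trans hw.integral_le

protected lemma norm_sub_le (hw : ProfileBound w δ) (ha : 0 < a) (hab : a ≤ b) :
    ‖w b - w a‖ ≤ δ * √(b - a) := by
  have hderiv (p) (hp : p ∈ uIcc a b) : HasDerivAt w (deriv w p) p := by
    rw [uIcc_of_le hab] at hp
    exact (hw.diff p (ha.trans_le hp.1)).hasDerivAt
  rw [← intervalIntegral.integral_eq_sub_of_hasDerivAt hderiv
    (hw.intervalIntegrable_deriv ha.le hab)]
  refine (intervalIntegral.norm_integral_le_integral_norm hab).trans ?_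
  simpa using hw.integral_norm_deriv_mul_le (g := fun _ => 1) ha.le hab continuousOn_const
    fun _ _ => zero_le_one

lemma norm_le_mul_sqrt (hw : ProfileBound w δ) (h0 : Tendsto w (𝓝[>] 0) (𝓝 0)) (hb : 0 < b) :
    ‖w b‖ ≤ δ * √b := by
  have hlim : Tendsto (fun a => ‖w b - w a‖) (𝓝[>] 0) (𝓝 ‖w b‖) := by
    simpa using (h0.const_sub (w b)).norm
  refine le_of_tendsto hlim ?_
  filter_upwards [Ioo_mem_nhdsGT hb] with a ha
  refine (hw.norm_sub_le ha.1 ha.2.le).trans ?_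
  exact mul_le_mul_of_nonneg_left (Real.sqrt_le_sqrt (by linarith [ha.1])) hw.nonneg

lemma integral_norm_sq_div_sq_le (hw : ProfileBound w δ) (h0 : Tendsto w (𝓝[>] 0) (𝓝 0))
    (ha : 0 < a) (hab : a ≤ b) : ∫ p in a..b, ‖w p‖ ^ 2 / p ^ 2 ≤ 6 * δ ^ 2 := by
  have hhardy := MKdVPaper.integral_norm_sq_div_sq_le ha hab
    (fun p hp => (hw.diff p (ha.trans_le hp.1)).hasDerivAt)
    (hw.intervalIntegrable_norm_deriv_sq ha.le hab)
  have hend : ‖w a‖ ^ 2 / a ≤ δ ^ 2 := by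
    rw [div_le_iff₀ ha, ← Real.sq_sqrt ha.le, ← mul_pow, Real.sq_sqrt ha.le]
    exact pow_le_pow_left₀ (norm_nonneg _) (hw.norm_le_mul_sqrt h0 ha) 2
  linarith [hw.integral_norm_deriv_sq_le ha.le hab]

lemma continuousOn_airyPhase_mul_div (hw : ProfileBound w δ) (x : ℝ) (ha : 0 < a) :
    ContinuousOn (fun p : ℝ => airyPhase x p * (w p / (Complex.I * p))) (Icc a b) := by
  have hpos (p) (hp : p ∈ Icc a b) : 0 < p := ha.trans_le hp.1
  refine (continuous_airyPhase x).continuousOn.mul (ContinuousOn.div (fun p hp => ?_)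
    (by fun_prop) fun p hp => ?_)
  · exact (hw.diff p (hpos p hp)).continuousAt.continuousWithinAt
  · exact mul_ne_zero Complex.I_ne_zero (Complex.ofReal_ne_zero.2 (hpos p hp).ne')

lemma hasDerivAt_truncatedPrimitive (hw : ProfileBound w δ) (ha : 0 < a) (hab : a ≤ b) (x : ℝ) :
    HasDerivAt (truncatedPrimitive w a b) (physPartial w 1 x b - physPartial w 1 x a) x := by
  have hpos (p) (hp : p ∈ uIoc a b) : 0 < p := by
    rw [uIoc_of_le hab] at hp
    exact ha.trans hp.1
  have hint (y : ℝ) : IntervalIntegrable (fun p => airyPhase y p * (w p / (Complex.I * p)))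
      volume a b := by
    refine ContinuousOn.intervalIntegrable ?_
    rw [uIcc_of_le hab]
    exact hw.continuousOn_airyPhase_mul_div y ha
  have hphase (p) (hp : p ∈ uIoc a b) (y : ℝ) : HasDerivAt
      (fun y => airyPhase y p * (w p / (Complex.I * p))) (airyPhase y p * w p) y := by
    have hp0 : (p : ℂ) ≠ 0 := Complex.ofReal_ne_zero.2 (hpos p hp).ne'
    have hlin : HasDerivAt (fun y : ℝ => p * y + p ^ 3) p y := by
      simpa using ((hasDerivAt_id y).const_mul p).add_const (p ^ 3)
    refine (((hlin.ofReal_comp.const_mul Complex.I).cexp).mul_const _).congr_deriv ?_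
    rw [airyPhase, mul_assoc, mul_div_cancel₀ _ (mul_ne_zero Complex.I_ne_zero hp0)]
  have hderiv := (intervalIntegral.hasDerivAt_integral_of_dominated_loc_of_deriv_le
    (F := fun y p => airyPhase y p * (w p / (Complex.I * p)))
    (F' := fun y p => airyPhase y p * w p) (bound := fun _ => δ) (univ_mem (f := 𝓝 x))
    (Eventually.of_forall fun y => (intervalIntegrable_iff.1 (hint y)).aestronglyMeasurable)
    (hint x)
    (intervalIntegrable_iff.1
      (hw.intervalIntegrable x ha.le (ha.le.trans hab))).aestronglyMeasurable
    (ae_of_all _ fun p hp y _ => by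
      rw [norm_mul, norm_airyPhase, one_mul]
      exact hw.bound p (hpos p hp)) (by simp)
    (ae_of_all _ fun p hp y _ => hphase p hp y)).2
  rw [hw.physPartial_sub x ha.le (ha.le.trans hab)]
  exact (Complex.reCLM.hasFDerivAt.comp_hasDerivAt x hderiv).const_mul (1 / Real.pi)

theorem integral_truncatedPrimitive_sq_le (hw : ProfileBound w δ)
    (h0 : Tendsto w (𝓝[>] 0) (𝓝 0)) (ha : 0 < a) (hab : a ≤ b) :
    Integrable (fun x => truncatedPrimitive w a b x ^ 2) ∧
      ∫ x, truncatedPrimitive w a b x ^ 2 ≤ 2 * Real.pi * (6 * δ ^ 2) := by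
  have hshift (x p : ℝ) : airyPhase x p * (w p / (Complex.I * p))
      = Complex.exp (Complex.I * ((p * x : ℝ) : ℂ))
        * (airyPhase 0 p * (w p / (Complex.I * p))) := by
    rw [← mul_assoc, airyPhase, airyPhase, ← Complex.exp_add]
    congr 2
    push_cast
    ring
  have hnorm (p : ℝ) : ‖airyPhase 0 p * (w p / (Complex.I * p))‖ ^ 2 = ‖w p‖ ^ 2 / p ^ 2 := by
    simp only [norm_mul, norm_airyPhase, one_mul, norm_div, Complex.norm_I, Complex.norm_real,
      Real.norm_eq_abs, div_pow, sq_abs]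
  obtain ⟨hint, hplancherel⟩ :=
    integral_norm_sq_intervalIntegral_cexp hab (hw.continuousOn_airyPhase_mul_div 0 ha)
  simp only [← hshift, hnorm] at hint hplancherel
  have hle (x : ℝ) : truncatedPrimitive w a b x ^ 2
      ≤ ‖∫ p in a..b, airyPhase x p * (w p / (Complex.I * p))‖ ^ 2 :=
    (sq_abs _).symm.trans_le (pow_le_pow_left₀ (abs_nonneg _)
      ((abs_one_div_pi_mul_re_le _).trans (div_le_self (norm_nonneg _) (by norm_num))) 2)
  have hcont : Continuous (truncatedPrimitive w a b) :=
    continuous_iff_continuousAt.2 fun x => (hw.hasDerivAt_truncatedPrimitive ha hab x).continuousAt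
  have hsq : Integrable fun x => truncatedPrimitive w a b x ^ 2 :=
    hint.mono' (hcont.pow 2).aestronglyMeasurable (ae_of_all _ fun x => by
      rw [Real.norm_of_nonneg (sq_nonneg _)]
      exact hle x)
  refine ⟨hsq, (integral_mono hsq hint hle).trans ?_⟩
  rw [hplancherel]
  exact mul_le_mul_of_nonneg_left (hw.integral_norm_sq_div_sq_le h0 ha hab) (by positivity)

end ProfileBound

theorem IsPhys.exists_sq_integrable_primitive (hV : IsPhys w 1 V) (hw : ProfileBound w δ)
    (h0 : Tendsto w (𝓝[>] 0) (𝓝 0)) :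
    ∃ G : ℝ → ℝ, (∀ x, HasDerivAt G (V x) x) ∧ Integrable fun x => G x ^ 2 := by
  let a (n : ℕ) : ℝ := 1 / (n + 1)
  let b (n : ℕ) : ℝ := n + 1
  have ha (n) : 0 < a n := Nat.one_div_pos_of_nat
  have hb (n) : 0 ≤ b n := by positivity
  have hab (n) : a n ≤ b n := by
    have h1 : (1 : ℝ) ≤ n + 1 := by simp
    exact ((div_le_one (by positivity)).2 h1).trans h1
  have hL2 (n) := hw.integral_truncatedPrimitive_sq_le h0 (ha n) (hab n)
  have hbound (x) {R : ℝ} (hR : 0 ≤ R) : |physPartial w 1 x R| ≤ 5 * δ :=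
    (hw.abs_physPartial_le x hR).trans
      (mul_le_of_le_one_right (by linarith [hw.nonneg]) (airyDecay_le_one x))
  refine MKdVPaper.exists_sq_integrable_primitive (K := 10 * δ)
    (fun n x => hw.hasDerivAt_truncatedPrimitive (ha n) (hab n) x)
    (fun n => (hw.continuous_physPartial (hb n)).sub (hw.continuous_physPartial (ha n).le))
    (fun n x => ?_) (fun n => (hL2 n).1) (fun n => (hL2 n).2) (fun x => ?_) (hV.continuous hw)
  · refine (abs_sub _ _).trans ?_
    linarith [hbound x (hb n), hbound x (ha n).le]
  · have hhigh : Tendsto (fun n => physPartial w 1 x (b n)) atTop (𝓝 (V x)) :=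
      (hV x).comp (tendsto_atTop_add_const_right _ _ tendsto_natCast_atTop_atTop)
    have hlow : Tendsto (fun n => physPartial w 1 x (a n)) atTop (𝓝 0) := by
      refine squeeze_zero_norm (fun n => hw.abs_physPartial_le_mul x (ha n).le) ?_
      simpa [a] using (tendsto_one_div_add_atTop_nhds_zero_nat (𝕜 := ℝ)).const_mul δ
    simpa using hhigh.sub hlow

end Physical

/-! ### The profile equation of a self-similar solution -/

section ProfileEquation

open scoped ContDiff

/-- The function `a(t) ψ(t^{-1/3} x)`, a test function adapted to self-similar solutions. -/
def selfSimilarTest (a ψ : ℝ → ℝ) (t x : ℝ) : ℝ := a t * ψ (t ^ (-(1 / 3 : ℝ)) * x)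

/-- The integrand of the profile equation `V''' - (y V)' / 3 + ε (V³)' = 0` tested against `-ψ`. -/
def profileIntegrand (ε : ℝ) (V ψ : ℝ → ℝ) (y : ℝ) : ℝ :=
  V y * (deriv (deriv (deriv ψ)) y - y * deriv ψ y / 3) + ε * V y ^ 3 * deriv ψ y

/-- `V` solves the profile equation `V''' - (y V)' / 3 + ε (V³)' = 0` in the sense of
distributions. -/
def IsWeakProfile (ε : ℝ) (V : ℝ → ℝ) : Prop :=
  ∀ ψ, IsTestFunction ψ → ∫ y, profileIntegrand ε V ψ y = 0

variable {a ψ V : ℝ → ℝ} {ε t x : ℝ}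

lemma tsupport_selfSimilarTest_subset (a ψ : ℝ → ℝ) :
    tsupport (fun q : ℝ × ℝ => selfSimilarTest a ψ q.1 q.2) ⊆ tsupport a ×ˢ univ :=
  closure_minimal (fun _ hq => ⟨subset_tsupport _ (left_ne_zero_of_mul hq), mem_univ _⟩)
    ((isClosed_tsupport a).prod isClosed_univ)

lemma contDiff_selfSimilarTest {n : WithTop ℕ∞} (ha : ContDiff ℝ n a) (ha0 : tsupport a ⊆ Ioi 0)
    (hψ : ContDiff ℝ n ψ) : ContDiff ℝ n fun q : ℝ × ℝ => selfSimilarTest a ψ q.1 q.2 := by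
  refine contDiff_iff_contDiffAt.2 fun q => ?_
  by_cases hq : q.1 ∈ tsupport a
  · have hscale : ContDiffAt ℝ n (fun q : ℝ × ℝ => q.1 ^ (-(1 / 3 : ℝ))) q :=
      contDiffAt_fst.rpow_const_of_ne (ha0 hq).ne'
    exact (ha.contDiffAt.comp q contDiffAt_fst).mul
      (hψ.contDiffAt.comp q (hscale.mul contDiffAt_snd))
  · exact contDiffAt_const.congr_of_eventuallyEq (notMem_tsupport_iff_eventuallyEq.1 fun h =>
      hq (tsupport_selfSimilarTest_subset a ψ h).1)

lemma hasCompactSupport_selfSimilarTest (ha : HasCompactSupport a) (ha0 : tsupport a ⊆ Ioi 0)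
    (hψ : HasCompactSupport ψ) :
    HasCompactSupport fun q : ℝ × ℝ => selfSimilarTest a ψ q.1 q.2 := by
  have hscale : Continuous fun q : ℝ × ℝ => (q.1, q.1 ^ (1 / 3 : ℝ) * q.2) :=
    continuous_fst.prodMk ((continuous_fst.rpow_const fun _ => Or.inr (by norm_num)).mul
      continuous_snd)
  refine HasCompactSupport.intro ((ha.isCompact.prod hψ.isCompact).image hscale) fun q hq => ?_
  by_contra hne
  obtain ⟨hat, hψt⟩ := mul_ne_zero_iff.1 hne
  have hq0 : 0 < q.1 := ha0 (subset_tsupport a hat)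
  refine hq ⟨(q.1, q.1 ^ (-(1 / 3 : ℝ)) * q.2),
    ⟨subset_tsupport a hat, subset_tsupport ψ hψt⟩, Prod.ext rfl ?_⟩
  change q.1 ^ (1 / 3 : ℝ) * (q.1 ^ (-(1 / 3 : ℝ)) * q.2) = q.2
  rw [← mul_assoc, ← Real.rpow_add hq0, add_neg_cancel, Real.rpow_zero, one_mul]

lemma dx1_selfSimilarTest (a : ℝ → ℝ) (hψ : Differentiable ℝ ψ) :
    dx1 (selfSimilarTest a ψ)
      = selfSimilarTest (fun t => a t * t ^ (-(1 / 3 : ℝ))) (deriv ψ) := by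
  funext t x
  have hlin : HasDerivAt (fun y => t ^ (-(1 / 3 : ℝ)) * y) (t ^ (-(1 / 3 : ℝ))) x := by
    simpa using (hasDerivAt_id x).const_mul (t ^ (-(1 / 3 : ℝ)))
  refine (((hψ _).hasDerivAt.comp x hlin).const_mul (a t)).deriv.trans ?_
  rw [selfSimilarTest]
  ring

lemma dt1_selfSimilarTest (ha : DifferentiableAt ℝ a t) (ht : t ≠ 0) (hψ : Differentiable ℝ ψ) :
    dt1 (selfSimilarTest a ψ) t x = deriv a t * ψ (t ^ (-(1 / 3 : ℝ)) * x)
      - a t / t * (t ^ (-(1 / 3 : ℝ)) * x * deriv ψ (t ^ (-(1 / 3 : ℝ)) * x) / 3) := by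
  have hscale : HasDerivAt (fun s : ℝ => s ^ (-(1 / 3 : ℝ)) * x)
      (-(1 / 3 : ℝ) * (t ^ (-(1 / 3 : ℝ)) / t) * x) t := by
    rw [← Real.rpow_sub_one ht]
    exact (Real.hasDerivAt_rpow_const (Or.inl ht)).mul_const x
  refine (ha.hasDerivAt.mul ((hψ _).hasDerivAt.comp t hscale)).deriv.trans ?_
  simp only [Function.comp]
  ring

lemma continuous_mul_of_tsupport_subset {g : ℝ → ℝ} (ha : Continuous a)
    (ha0 : tsupport a ⊆ Ioi 0) (hg : ∀ t, 0 < t → ContinuousAt g t) :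
    Continuous fun t => a t * g t :=
  continuous_of_tsupport fun t ht =>
    ha.continuousAt.mul (hg t (ha0 (tsupport_mul_subset_left ht)))

lemma integrable_selfSimilarTest (ha : Continuous a) (hac : HasCompactSupport a)
    (ha0 : tsupport a ⊆ Ioi 0) (hψ : Continuous ψ) (hψc : HasCompactSupport ψ) :
    Integrable fun q : ℝ × ℝ =>
      selfSimilarTest (fun t => a t * t ^ (-(1 / 3 : ℝ))) ψ q.1 q.2 := by
  have hscale : Continuous fun t => a t * t ^ (-(1 / 3 : ℝ)) :=
    continuous_mul_of_tsupport_subset ha ha0 fun t ht =>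
      Real.continuousAt_rpow_const _ _ (Or.inl ht.ne')
  have hsub := (tsupport_mul_subset_left (f := a) (g := fun t => t ^ (-(1 / 3 : ℝ)))).trans ha0
  exact (contDiff_selfSimilarTest (contDiff_zero.2 hscale) hsub
    (contDiff_zero.2 hψ)).continuous.integrable_of_hasCompactSupport
      (hasCompactSupport_selfSimilarTest hac.mul_right hsub hψc)

lemma integral_selfSimilarTest (ha : Continuous a) (hac : HasCompactSupport a)
    (ha0 : tsupport a ⊆ Ioi 0) (hψ : Continuous ψ) (hψc : HasCompactSupport ψ) :
    ∫ q : ℝ × ℝ, selfSimilarTest (fun t => a t * t ^ (-(1 / 3 : ℝ))) ψ q.1 q.2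
      = (∫ t, a t) * ∫ y, ψ y := by
  have hinner (t : ℝ) : ∫ x, selfSimilarTest (fun t => a t * t ^ (-(1 / 3 : ℝ))) ψ t x
      = a t * ∫ y, ψ y := by
    by_cases hat : a t = 0
    · simp only [selfSimilarTest, hat, zero_mul, integral_zero]
    have hs : 0 < t ^ (-(1 / 3 : ℝ)) := Real.rpow_pos_of_pos (ha0 (subset_tsupport a hat)) _
    simp only [selfSimilarTest]
    rw [integral_const_mul, Measure.integral_comp_mul_left, abs_of_pos (inv_pos.2 hs), smul_eq_mul,
      mul_assoc, mul_inv_cancel_left₀ hs.ne']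
  rw [Measure.volume_eq_prod, integral_prod _ (integrable_selfSimilarTest ha hac ha0 hψ hψc)]
  simp only [hinner]
  exact integral_mul_const _ _

lemma IsTestFunction.continuous_profileIntegrand (hψ : IsTestFunction ψ) (ε : ℝ)
    (hV : Continuous V) : Continuous (profileIntegrand ε V ψ) := by
  have h1 := hψ.deriv.continuous
  have h3 := hψ.deriv.deriv.deriv.continuous
  unfold profileIntegrand
  fun_prop

lemma IsTestFunction.hasCompactSupport_profileIntegrand (hψ : IsTestFunction ψ) (ε : ℝ)
    (V : ℝ → ℝ) : HasCompactSupport (profileIntegrand ε V ψ) := by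
  have h1 := hψ.deriv.hasCompactSupport
  refine HasCompactSupport.add (HasCompactSupport.mul_left
    (hψ.deriv.deriv.deriv.hasCompactSupport.sub ?_)) h1.mul_left
  exact (h1.mul_left (f := fun y => y)).mul_right (f' := fun _ => (3 : ℝ)⁻¹)

lemma rpow_neg_third_pow_three (ht : 0 ≤ t) : (t ^ (-(1 / 3 : ℝ))) ^ 3 = t⁻¹ := by
  rw [← Real.rpow_natCast, ← Real.rpow_mul ht, ← Real.rpow_neg_one]
  norm_num

lemma dt1_selfSimilarTest_of_notMem_tsupport (ψ : ℝ → ℝ) (ht : t ∉ tsupport a) :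
    dt1 (selfSimilarTest a ψ) t x = 0 := by
  have hzero : (fun s => selfSimilarTest a ψ s x) =ᶠ[𝓝 t] fun _ => 0 := by
    filter_upwards [notMem_tsupport_iff_eventuallyEq.1 ht] with s hs
    rw [selfSimilarTest, hs, Pi.zero_apply, zero_mul]
  rw [dt1, hzero.deriv_eq, deriv_const]

lemma selfSimilar_integrand_eq {u : ℝ} (ha : IsTestFunction a) (ha0 : tsupport a ⊆ Ioi 0)
    (hψ : IsTestFunction ψ)
    (hu : t ∈ tsupport a → u = t ^ (-(1 / 3 : ℝ)) * V (t ^ (-(1 / 3 : ℝ)) * x)) :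
    u * (dt1 (selfSimilarTest a ψ) t x + dx1 (dx1 (dx1 (selfSimilarTest a ψ))) t x)
        + ε * u ^ 3 * dx1 (selfSimilarTest a ψ) t x =
      selfSimilarTest (fun t => deriv a t * t ^ (-(1 / 3 : ℝ))) (fun y => V y * ψ y) t x
        + selfSimilarTest (fun t => a t * t⁻¹ * t ^ (-(1 / 3 : ℝ)))
            (profileIntegrand ε V ψ) t x := by
  rw [dx1_selfSimilarTest _ hψ.differentiable, dx1_selfSimilarTest _ hψ.deriv.differentiable,
    dx1_selfSimilarTest _ hψ.deriv.deriv.differentiable]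
  by_cases ht : t ∈ tsupport a
  · have ht0 : 0 < t := ha0 ht
    rw [dt1_selfSimilarTest (ha.differentiable t) ht0.ne' hψ.differentiable, hu ht]
    simp only [selfSimilarTest, profileIntegrand, div_eq_mul_inv (a t) t,
      ← rpow_neg_third_pow_three ht0.le]
    ring
  · rw [dt1_selfSimilarTest_of_notMem_tsupport ψ ht]
    simp only [selfSimilarTest, image_eq_zero_of_notMem_tsupport ht,
      image_eq_zero_of_notMem_tsupport fun h => ht (tsupport_deriv_subset h)]
    ring

theorem IsSolOn.isWeakProfile {u : ℝ → ℝ → ℝ} {I : Set ℝ} (hu : IsSolOn ε u I) (hI : I ⊆ Ioi 0)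
    (hint : (interior I).Nonempty) (hV : Continuous V)
    (huV : ∀ t ∈ I, ∀ x, u t x = t ^ (-(1 / 3 : ℝ)) * V (t ^ (-(1 / 3 : ℝ)) * x)) :
    IsWeakProfile ε V := by
  intro ψ hψ
  obtain ⟨t₀, ht₀⟩ := hint
  obtain ⟨a, haI, hac, has, ha01, hat₀⟩ :=
    exists_contDiff_tsupport_subset (n := ⊤) (isOpen_interior.mem_nhds ht₀)
  have ha : IsTestFunction a := ⟨has, hac⟩
  have ha0 : tsupport a ⊆ Ioi 0 := haI.trans (interior_subset.trans hI)
  have hainv : Continuous fun t => a t * t⁻¹ :=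
    continuous_mul_of_tsupport_subset ha.continuous ha0 fun t ht => continuousAt_inv₀ ht.ne'
  have hainv0 := (tsupport_mul_subset_left (f := a) (g := fun t => t⁻¹)).trans ha0
  have hVψ : Continuous fun y => V y * ψ y := hV.mul hψ.continuous
  have hVψc : HasCompactSupport fun y => V y * ψ y := hψ.hasCompactSupport.mul_left
  have hP := hψ.continuous_profileIntegrand ε hV
  have hPc := hψ.hasCompactSupport_profileIntegrand ε V
  have hda0 : tsupport (deriv a) ⊆ Ioi 0 := tsupport_deriv_subset.trans ha0
  have hsol := hu (selfSimilarTest a ψ) (contDiff_selfSimilarTest has ha0 hψ.contDiff)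
    (hasCompactSupport_selfSimilarTest hac ha0 hψ.hasCompactSupport)
    ((tsupport_selfSimilarTest_subset a ψ).trans (prod_mono_left haI))
  simp only [fun q : ℝ × ℝ => selfSimilar_integrand_eq (ε := ε) (x := q.2) ha ha0 hψ
    fun h => huV q.1 (interior_subset (haI h)) q.2] at hsol
  rw [integral_add
      (integrable_selfSimilarTest ha.deriv.continuous hac.deriv hda0 hVψ hVψc)
      (integrable_selfSimilarTest hainv hac.mul_right hainv0 hP hPc),
    integral_selfSimilarTest ha.deriv.continuous hac.deriv hda0 hVψ hVψc,
    integral_selfSimilarTest hainv hac.mul_right hainv0 hP hPc,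
    integral_eq_zero_of_hasDerivAt_of_integrable ha.hasDerivAt ha.deriv.integrable ha.integrable,
    zero_mul, zero_add] at hsol
  refine (mul_eq_zero.1 hsol).resolve_left (ne_of_gt ?_)
  refine hainv.integral_pos_of_hasCompactSupport_nonneg_nonzero (x := t₀) hac.mul_right
    (fun t => ?_) ?_
  · by_cases hat : a t = 0
    · simp [hat]
    · exact mul_nonneg (ha01 (mem_range_self t)).1
        (inv_nonneg.2 (ha0 (subset_tsupport a hat)).le)
  · rw [hat₀, one_mul]
    exact inv_ne_zero (hI (interior_subset ht₀)).ne'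

lemma SelfSimilar.eq_at_one {I : Set ℝ} {S : ESol I} (hS : SelfSimilar S) (h1 : 1 ∈ I)
    (ht : t ∈ I) (x : ℝ) :
    S.u t x = t ^ (-(1 / 3 : ℝ)) * S.u 1 (t ^ (-(1 / 3 : ℝ)) * x) := by
  obtain ⟨V, hV⟩ := hS
  simp only [hV t ht, hV 1 h1, Real.one_rpow, one_mul]

end ProfileEquation

/-! ### Differences of self-similar profiles -/

section Uniqueness

variable {w w' : ℝ → ℂ} {V V' : ℝ → ℝ} {ε δ δ' : ℝ}

lemma ProfileBound.integral_norm_deriv_mul_norm_deriv_le (hw : ProfileBound w δ)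
    (hw' : ProfileBound w' δ') : ∫ p in Ioi 0, ‖deriv w p‖ * ‖deriv w' p‖ ≤ δ * δ' := by
  refine (integral_mul_le_sqrt_mul_sqrt (ae_of_all _ fun _ => norm_nonneg _)
    (ae_of_all _ fun _ => norm_nonneg _) hw.memLp_deriv.norm hw'.memLp_deriv.norm).trans ?_
  exact mul_le_mul ((Real.sqrt_le_left hw.nonneg).2 hw.integral_le)
    ((Real.sqrt_le_left hw'.nonneg).2 hw'.integral_le) (Real.sqrt_nonneg _) hw.nonneg

lemma ProfileBound.sub (hw : ProfileBound w δ) (hw' : ProfileBound w' δ') :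
    ProfileBound (fun p => w p - w' p) (δ + δ') := by
  have hd : EqOn (fun p => ‖deriv w p - deriv w' p‖ ^ 2)
      (fun p => ‖deriv (fun p => w p - w' p) p‖ ^ 2) (Ioi 0) := fun p hp => by
    simp only [deriv_fun_sub (hw.diff p hp) (hw'.diff p hp)]
  have hi : IntegrableOn (fun p => ‖deriv w p - deriv w' p‖ ^ 2) (Ioi 0) :=
    (hw.memLp_deriv.sub hw'.memLp_deriv).integrable_norm_pow two_ne_zero
  have hmul : IntegrableOn (fun p => ‖deriv w p‖ * ‖deriv w' p‖) (Ioi 0) :=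
    hw.memLp_deriv.norm.integrable_mul hw'.memLp_deriv.norm
  have hsq : IntegrableOn (fun p => ‖deriv w p‖ ^ 2 + ‖deriv w' p‖ ^ 2) (Ioi 0) :=
    hw.integrable.add hw'.integrable
  refine ⟨fun p hp => (hw.diff p hp).sub (hw'.diff p hp), fun p hp =>
    (norm_sub_le _ _).trans (add_le_add (hw.bound p hp) (hw'.bound p hp)),
    hi.congr_fun hd measurableSet_Ioi, ?_⟩
  rw [← setIntegral_congr_fun measurableSet_Ioi hd]
  calc ∫ p in Ioi 0, ‖deriv w p - deriv w' p‖ ^ 2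
      ≤ ∫ p in Ioi 0, (‖deriv w p‖ ^ 2 + ‖deriv w' p‖ ^ 2 + 2 * (‖deriv w p‖ * ‖deriv w' p‖)) := by
        refine integral_mono hi (hsq.add (hmul.const_mul 2)) fun p => ?_
        refine (pow_le_pow_left₀ (norm_nonneg _) (norm_sub_le _ _) 2).trans_eq ?_
        ring
    _ = (∫ p in Ioi 0, ‖deriv w p‖ ^ 2) + (∫ p in Ioi 0, ‖deriv w' p‖ ^ 2)
          + 2 * ∫ p in Ioi 0, ‖deriv w p‖ * ‖deriv w' p‖ := by
        rw [integral_add hsq (hmul.const_mul 2), integral_add hw.integrable hw'.integrable,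
          integral_const_mul]
    _ ≤ (δ + δ') ^ 2 := by
        linarith [hw.integral_le, hw'.integral_le, hw.integral_norm_deriv_mul_norm_deriv_le hw']

lemma IsPhys.sub (hV : IsPhys w 1 V) (hV' : IsPhys w' 1 V') (hw : ProfileBound w δ)
    (hw' : ProfileBound w' δ') : IsPhys (fun p => w p - w' p) 1 fun x => V x - V' x := fun x => by
  refine ((hV x).sub (hV' x)).congr' ?_
  filter_upwards [eventually_ge_atTop 0] with R hR
  rw [physPartial_one_eq _ x hR, physPartial_one_eq _ x hR, physPartial_one_eq _ x hR, ← mul_sub,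
    ← Complex.sub_re, ← intervalIntegral.integral_sub (hw.intervalIntegrable x le_rfl hR)
      (hw'.intervalIntegrable x le_rfl hR)]
  simp only [mul_sub]

lemma SameZeroLimit.tendsto_sub (h : SameZeroLimit w w') :
    Tendsto (fun p => w p - w' p) (𝓝[>] 0) (𝓝 0) := by
  obtain ⟨c, hc, hc'⟩ := h
  have hlim := (hc.sub hc').norm
  rw [sub_self, norm_zero] at hlim
  refine tendsto_zero_iff_norm_tendsto_zero.2 (hlim.congr fun p => ?_)
  rw [hatAtOne, hatAtOne, ← mul_sub, norm_mul, mul_comm Complex.I, Complex.norm_exp_ofReal_mul_I,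
    one_mul]

/-- The factor `q = ε (V² + V V' + V'²)` in `ε (V³ - V'³) = q (V - V')`, which perturbs the Airy
equation satisfied by the difference of two profiles. -/
def profilePotential (ε : ℝ) (V V' : ℝ → ℝ) (x : ℝ) : ℝ :=
  ε * (V x ^ 2 + V x * V' x + V' x ^ 2)

lemma abs_profilePotential_le {A x : ℝ} (hV : |V x| ≤ A) (hV' : |V' x| ≤ A) :
    |profilePotential ε V V' x| ≤ 3 * (|ε| * A ^ 2) := by
  have hA : 0 ≤ A := (abs_nonneg _).trans hV
  have hquad : |V x ^ 2 + V x * V' x + V' x ^ 2| ≤ A ^ 2 + A * A + A ^ 2 := by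
    refine (abs_add_three _ _ _).trans ?_
    rw [abs_pow, abs_pow, abs_mul]
    gcongr
  rw [profilePotential, abs_mul]
  exact (mul_le_mul_of_nonneg_left hquad (abs_nonneg ε)).trans_eq (by ring)

lemma IsWeakProfile.integral_sub_eq_zero (hV : IsWeakProfile ε V) (hV' : IsWeakProfile ε V')
    (hVc : Continuous V) (hVc' : Continuous V') {ψ : ℝ → ℝ} (hψ : IsTestFunction ψ) :
    ∫ x, ((V x - V' x) * deriv (deriv (deriv ψ)) x
      - (x * (V x - V' x) / 3 - profilePotential ε V V' x * (V x - V' x)) * deriv ψ x) = 0 := by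
  have hint {U : ℝ → ℝ} (hU : Continuous U) : Integrable (profileIntegrand ε U ψ) :=
    (hψ.continuous_profileIntegrand ε hU).integrable_of_hasCompactSupport
      (hψ.hasCompactSupport_profileIntegrand ε U)
  calc ∫ x, ((V x - V' x) * deriv (deriv (deriv ψ)) x
        - (x * (V x - V' x) / 3 - profilePotential ε V V' x * (V x - V' x)) * deriv ψ x)
      = ∫ x, (profileIntegrand ε V ψ x - profileIntegrand ε V' ψ x) := by
        refine integral_congr_ae (ae_of_all _ fun x => ?_)
        simp only [profileIntegrand, profilePotential]
        ring
    _ = 0 := by rw [integral_sub (hint hVc) (hint hVc'), hV ψ hψ, hV' ψ hψ, sub_zero]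

lemma IsWeakProfile.exists_isPerturbedAiry (hV : IsWeakProfile ε V) (hV' : IsWeakProfile ε V')
    (hVc : Continuous V) (hVc' : Continuous V') {G : ℝ → ℝ}
    (hG : ∀ x, HasDerivAt G (V x - V' x) x) :
    ∃ β D₁, IsPerturbedAiry (profilePotential ε V V') β G (fun x => V x - V' x) D₁ := by
  have hcont : Continuous fun x =>
      x * (V x - V' x) / 3 - profilePotential ε V V' x * (V x - V' x) := by
    unfold profilePotential
    fun_prop
  obtain ⟨D₁, β, hD, hD₁⟩ := exists_hasDerivAt_of_integral_eq_zero (hVc.sub hVc') hcont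
    fun _ hψ => hV.integral_sub_eq_zero hV' hVc hVc' hψ
  exact ⟨β, D₁, hG, hD, hD₁⟩

theorem IsWeakProfile.eq_of_sameZeroLimit (hV : IsWeakProfile ε V) (hV' : IsWeakProfile ε V')
    (hp : IsPhys w 1 V) (hp' : IsPhys w' 1 V') (hw : ProfileBound w δ) (hw' : ProfileBound w' δ)
    (h0 : SameZeroLimit w w') (hεδ : |ε| * δ ^ 2 ≤ 1 / 10000) : V = V' := by
  obtain ⟨G, hG, hGi⟩ :=
    (hp.sub hp' hw hw').exists_sq_integrable_primitive (hw.sub hw') h0.tendsto_sub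
  obtain ⟨β, D₁, hA⟩ := hV.exists_isPerturbedAiry hV' (hp.continuous hw) (hp'.continuous hw') hG
  have hD := (hp.sub hp' hw hw').abs_le (hw.sub hw')
  have hD0 : Tendsto (fun x => V x - V' x) (cocompact ℝ) (𝓝 0) :=
    squeeze_zero_norm hD (by simpa using tendsto_airyDecay.const_mul (5 * (δ + δ)))
  have hK : ∀ x, |V x - V' x| ≤ 5 * (δ + δ) := fun x =>
    (hD x).trans (mul_le_of_le_one_right (by linarith [hw.nonneg]) (airyDecay_le_one x))
  have hq : ∀ x, |profilePotential ε V V' x| ≤ 75 / 10000 * airyDecay x ^ 2 := fun x =>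
    calc |profilePotential ε V V' x|
        ≤ 3 * (|ε| * (5 * δ * airyDecay x) ^ 2) :=
          abs_profilePotential_le (hp.abs_le hw x) (hp'.abs_le hw' x)
      _ = 75 * (|ε| * δ ^ 2) * airyDecay x ^ 2 := by ring
      _ ≤ 75 / 10000 * airyDecay x ^ 2 := by gcongr; linarith
  have hq1 : ∀ x, |profilePotential ε V V' x| ≤ 1 := fun x => (hq x).trans (by
    linarith [pow_le_one₀ (n := 2) (airyDecay_pos x).le (airyDecay_le_one x)])
  have hqw : ∀ x, 2052 * profilePotential ε V V' x ^ 2 ≤ weight x := fun x => by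
    have hsq := pow_le_pow_left₀ (abs_nonneg _) (hq x) 2
    rw [sq_abs] at hsq
    linarith [airyDecay_pow_four_le x, weight_pos x]
  obtain rfl : β = 0 := hA.const_eq_zero hq1 hK (hD0.mono_left atTop_le_cocompact) hGi
  exact funext fun x => sub_eq_zero.1 (hA.eq_zero hqw hK hD0 hGi x)

theorem selfsimilar_uniqueness_general {I : Set ℝ} (hI : I ⊆ Ioi 0) (h1 : 1 ∈ I)
    (hint : (interior I).Nonempty) (hεδ : |ε| * δ ^ 2 ≤ 1 / 10000) {S S' : ESol I}
    (hS : IsSolOn ε S.u I) (hself : SelfSimilar S) (hle : EnormP 1 (S.w 1) ≤ δ)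
    (hS' : IsSolOn ε S'.u I) (hself' : SelfSimilar S') (hle' : EnormP 1 (S'.w 1) ≤ δ)
    (h0 : SameZeroLimit (S.w 1) (S'.w 1)) : ∀ t ∈ I, ∀ x, S.u t x = S'.u t x := by
  have hw := (S.memE 1 h1).profileBound hle
  have hw' := (S'.memE 1 h1).profileBound hle'
  have hV : IsWeakProfile ε (S.u 1) := hS.isWeakProfile hI hint ((S.isPhys 1 h1).continuous hw)
    fun _ ht => hself.eq_at_one h1 ht
  have hV' : IsWeakProfile ε (S'.u 1) := hS'.isWeakProfile hI hint
    ((S'.isPhys 1 h1).continuous hw') fun _ ht => hself'.eq_at_one h1 ht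
  have heq : S.u 1 = S'.u 1 :=
    hV.eq_of_sameZeroLimit hV' (S.isPhys 1 h1) (S'.isPhys 1 h1) hw hw' h0 hεδ
  intro t ht x
  rw [hself.eq_at_one h1 ht, hself'.eq_at_one h1 ht, heq]

end Uniqueness

/-- uniqueness of small self-similar solutions. -/
theorem selfsimilar_uniqueness :
    ∃ δ : ℝ, 0 < δ ∧
    ∀ ε : ℝ, (ε = 1 ∨ ε = -1) →
    ∀ S S' : ESol (Ici 1),
      IsSolOn ε S.u (Ici 1) → SelfSimilar S → EnormP 1 (S.w 1) ≤ δ →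
      IsSolOn ε S'.u (Ici 1) → SelfSimilar S' → EnormP 1 (S'.w 1) ≤ δ →
      SameZeroLimit (S.w 1) (S'.w 1) →
      ∀ t ∈ Ici (1 : ℝ), ∀ x : ℝ, S.u t x = S'.u t x := by
  refine ⟨1 / 100, by norm_num, fun ε hε S S' => ?_⟩
  have hεδ : |ε| * (1 / 100) ^ 2 ≤ 1 / 10000 := by rcases hε with rfl | rfl <;> norm_num
  exact selfsimilar_uniqueness_general (Ici_subset_Ioi.2 one_pos) self_mem_Ici
    (by rw [interior_Ici]; exact nonempty_Ioi) hεδ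

end MKdVPaper
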